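/- In Theta, the subgroup generated by the images of the five generators b, c, d, e, f has index 268800 = 2^9 * 3 * 5^2 * 7. (This subgroup is the vertex stabiliser, isomorphic to 3^4:F_4 of order 93312.) -/

import Mathlib

/-- Coxeter matrix of the string diagram [3,3,4,3,3] on generators a,b,c,d,e,f = 0..5. -/
def cox6 : Fin 6 → Fin 6 → ℕ := fun i j =>
  if i = j then 1
  else if (i : ℕ) + 1 = (j : ℕ) ∨ (j : ℕ) + 1 = (i : ℕ) then
    (if ((i : ℕ) = 2 ∧ (j : ℕ) = 3) ∨ ((i : ℕ) = 3 ∧ (j : ℕ) = 2) then 4 else 3)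
  else 2

def rels6 : Set (FreeGroup (Fin 6)) :=
  Set.range fun p : Fin 6 × Fin 6 => (FreeGroup.of p.1 * FreeGroup.of p.2) ^ cox6 p.1 p.2

/-- The Coxeter group of type [3,3,4,3,3]. -/
abbrev W : Type := PresentedGroup rels6

/-- The generators a,b,c,d,e,f of W, as w 0, ..., w 5. -/
def w (i : Fin 6) : W := PresentedGroup.of i

/-- sigma = d^(cb) = b*c*d*c*b. -/
def sg : W := w 1 * w 2 * w 3 * w 2 * w 1
/-- tau = c^(de) = e*d*c*d*e. -/
def tu : W := w 4 * w 3 * w 2 * w 3 * w 4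

/-- Theta: the quotient of W by the normal closure of (a σ τ)^4 and (f τ σ τ)^3. -/
abbrev Theta : Type :=
  W ⧸ Subgroup.normalClosure ({(w 0 * sg * tu) ^ 4, (w 5 * tu * sg * tu) ^ 3} : Set W)

/-- Images of the six generators in Theta. -/
def th (i : Fin 6) : Theta := QuotientGroup.mk (w i)

/-!
Let `p₀ = d ^ (cba)`, `p₁ = d ^ (cb)`, `p₂ = d ^ c`, `p₃ = d` and `p₄ = f`. They commute and each of
them satisfies a braid relation with `e`, so `e` is the centre of a Coxeter star with five leaves,
while `⟨a, b, c⟩`, a symmetric group of degree four, permutes `p₀, ..., p₃`. If `tᵢ` is the highest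
reflection of the `D₄` diagram on `e` and the three leaves other than `pᵢ` among `p₀, ..., p₃`, the
two last relations of `Theta` become `(p₀ t₀) ^ 2 = 1` and `(f t₀) ^ 3 = 1`.

`Theta` acts on `𝔽₂³²`, through the triality automorphisms of three split octonions and the
permutations of four blocks of coordinates. A coset enumeration whose points are vectors of this
representation yields both the length of an orbit and generators of the stabiliser. It shows that
the star generates a subgroup `D` of index `24` and that in `D` the stabiliser of a suitable vector
has index `360`, and is generated by conjugates of `p₀` that commute with `p₀`. Since the whole
stabiliser centralises `p₀`, a conjugate `p₀ ^ u` depends only on the image of the vector under `u`.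
This gives the relations of the Coxeter group `E₇` between seven of these conjugates, which generate
all the others but `p₀` itself; and `p₀` is a product of others by a relation in the affine group
of type `D₄`. Hence the stabiliser has the order `2903040` of that Coxeter group, so that
`|Theta| = 24 * 360 * 2903040`. Finally, `⟨b, c, d, e, f⟩` has order
`2 * 3 * 8 * 24 * 81 = 93312` by the same kind of enumeration along its generators.
-/

/-- `f x`, arranged so that evaluating it by reduction first turns `x` into a numeral. -/
def force {α : Type*} (x : ℕ) (f : ℕ → α) : α :=
  match x with
  | 0 => f 0
  | n + 1 => f (Nat.succ n)

@[simp] theorem force_eq {α : Type*} (x : ℕ) (f : ℕ → α) : force x f = f x := by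
  cases x <;> rfl

/-- The data of a verified coset enumeration: involutions `g s`, indexed by `Fin k`, act on `ℕ`
by a prescribed function, and the enumeration certifies the size of the orbit of `base` together
with generators of its stabiliser.

The tables are numbers, taken apart with the `Nat` operations that the kernel evaluates natively
(`Nat.testBit` is not one of them). `V` packs the orbit points in 32-bit fields; `T` packs the
number of `g s • point i` in the 9-bit field `slot i s`; `I` is a hash index, whose 9-bit fields
hold a point number plus one, or `0` if there is no point; `K` has one bit per edge `(i, s)`. -/
structure CosetLevel (k : ℕ) where
  /-- All orbit points are below `2 ^ bits`. -/
  bits : ℕ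
  /-- The orbit points are distinct modulo this number, so that it serves for hashing. -/
  modulus : ℕ
  base : ℕ
  size : ℕ
  /-- How often the relators are traced through the whole table. -/
  passes : ℕ
  relators : List (List (Fin k))
  /-- The pair `(u, s)` encodes the generator `u * g s * u⁻¹` of the stabiliser. -/
  loops : List (List (Fin k) × Fin k)

namespace CosetLevel

variable {k : ℕ}

def slot (i : ℕ) (s : Fin k) : ℕ := Nat.add (Nat.mul k i) s
def entry (T i : ℕ) (s : Fin k) : ℕ := Nat.land (Nat.shiftRight T (Nat.mul 9 (slot i s))) 511
def point (V i : ℕ) : ℕ := Nat.land (Nat.shiftRight V (Nat.mul 32 i)) 4294967295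
def known (K i : ℕ) (s : Fin k) : Bool := Nat.beq (Nat.land (Nat.shiftRight K (slot i s)) 1) 1
def mark (K i : ℕ) (s : Fin k) : ℕ := Nat.lor K (Nat.shiftLeft 1 (slot i s))
def index (m I v : ℕ) : ℕ := Nat.land (Nat.shiftRight I (Nat.mul 9 (Nat.mod v m))) 511

/-- The edge from `j` to its parent in a spanning tree of the Schreier graph: the last `s` that
leads to a smaller number. -/
def descent? (T j : ℕ) : Option (Fin k) :=
  (List.finRange k).reverse.find? fun s => Nat.blt (entry T j s) j

def allBelow : ℕ → (ℕ → Bool) → Bool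
  | 0, _ => true
  | n + 1, p => p n && allBelow n p

/-- Orbit enumeration, breadth first: `i` is the point being processed, `ls` the generators still
to be applied to it, and `n` the number of points found. The result is passed on to `ret`. -/
def enumerate (act : Fin k → ℕ → ℕ) (m : ℕ) (ret : ℕ → ℕ → ℕ → Bool) :
    ℕ → List (Fin k) → ℕ → ℕ → ℕ → ℕ → ℕ → Bool
  | 0, _, _, _, V, T, I => ret V T I
  | fuel + 1, [], i, n, V, T, I =>
    force (Nat.succ i) fun i => enumerate act m ret fuel (List.finRange k) i n V T I
  | fuel + 1, s :: ls, i, n, V, T, I =>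
    force (act s (point V i)) fun y => force (index m I y) fun j =>
    bif Nat.beq j 0 then
      force (Nat.lor V (Nat.shiftLeft y (Nat.mul 32 n))) fun V =>
      force (Nat.lor T (Nat.shiftLeft n (Nat.mul 9 (slot i s)))) fun T =>
      force (Nat.lor I (Nat.shiftLeft (Nat.succ n) (Nat.mul 9 (Nat.mod y m)))) fun I =>
      force (Nat.succ n) fun n => enumerate act m ret fuel ls i n V T I
    else
      force (Nat.lor T (Nat.shiftLeft (Nat.pred j) (Nat.mul 9 (slot i s)))) fun T =>
      enumerate act m ret fuel ls i n V T I

/-- The orbit tables `V`, `T` and `I` are consistent; nothing is assumed on how they arose. -/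
def isTable (act : Fin k → ℕ → ℕ) (L : CosetLevel k) (V T I : ℕ) : Bool :=
  Nat.beq (point V 0) L.base &&
  allBelow L.size fun i => force (point V i) fun v =>
    Nat.blt v (2 ^ L.bits) && Nat.beq (index L.modulus I v) (Nat.succ i) &&
    (Nat.beq i 0 || (descent? (k := k) T i).isSome) &&
    (List.finRange k).all fun s => force (entry T i s) fun j =>
      Nat.blt j L.size && Nat.beq (point V j) (act s v)

/-- Marks the edge `s` at `i` in both directions. -/
def markBoth (T K i : ℕ) (s : Fin k) : ℕ := mark (mark K i s) (entry T i s) s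

/-- The edges of the spanning tree on the first points. -/
def tree (k T : ℕ) : ℕ → ℕ
  | 0 => 0
  | j + 1 => force (tree k T j) fun K => match descent? (k := k) T j with
    | none => K
    | some s => markBoth T K j s

/-- Where the path with the letters `w`, read from left to right, leads to from a point. -/
def walk (T : ℕ) : List (Fin k) → ℕ → ℕ
  | [], i => i
  | s :: w, i => force (entry T i s) (walk T w)

/-- The path with the letters `w` uses only edges in `K` and leads to `z`. -/
def reaches (T K z : ℕ) : List (Fin k) → ℕ → Bool
  | [], i => Nat.beq i z
  | s :: w, i => bif known K i s then force (entry T i s) (reaches T K z w) else false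

/-- Marks the loops of the Schreier graph that are due to the generators of the stabiliser. -/
def markLoops (T : ℕ) : List (List (Fin k) × Fin k) → ℕ → ℕ
  | [], K => K
  | p :: ps, K => force (walk T p.1 0) fun i =>
    force (bif reaches T K i p.1 0 then mark K i p.2 else K) (markLoops T ps)

/-- The deduction step of Todd and Coxeter: the edge `s` at `i` is marked if it closes a relator
`s :: w`, with `w` in `ws`, all of whose other edges are in `K`. -/
def deduce (T : ℕ) (ws : List (List (Fin k))) (K i : ℕ) (s : Fin k) : ℕ :=
  bif known K i s then K else force (entry T i s) fun j =>
    bif ws.any (fun w => reaches T K j w i) then markBoth T K i s else K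

/-- The relators that begin with `s`, without this letter. -/
def relatorsAt (ws : List (List (Fin k))) (s : Fin k) : List (List (Fin k)) :=
  ws.filterMap fun w => match w with
    | [] => none
    | t :: w => bif Nat.beq s t then some w else none

/-- Deductions for the edges at `i`, where `ps` lists the letters with `relatorsAt` them. -/
def deduceAt (T i : ℕ) : List (Fin k × List (List (Fin k))) → ℕ → ℕ
  | [], K => K
  | p :: ps, K => force (deduce T p.2 K i p.1) (deduceAt T i ps)

/-- `deduceAt` for the last `m` of `n` points, in increasing order. -/
def sweep (T : ℕ) (ps : List (Fin k × List (List (Fin k)))) (n : ℕ) : ℕ → ℕ → ℕ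
  | 0, K => K
  | j + 1, K => force (deduceAt T (Nat.sub n (Nat.succ j)) ps K) (sweep T ps n j)

/-- The edges that are marked after `m` rounds of deductions. -/
def sweeps (L : CosetLevel k) (T : ℕ) : ℕ → ℕ
  | 0 => tree k T L.size
  | m + 1 => force (sweeps L T m) fun K => force (markLoops T L.loops K) fun K =>
    sweep T ((List.finRange k).map fun s => (s, relatorsAt L.relators s)) L.size L.size K

/-- Starting from the spanning tree, deductions mark every edge of the Schreier graph. -/
def isComplete (L : CosetLevel k) (act : Fin k → ℕ → ℕ) (V T I : ℕ) : Bool :=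
  Nat.blt 0 L.size && isTable act L V T I &&
  (L.loops.all fun p => force (walk T p.1 0) fun i => Nat.beq (entry T i p.2) i) &&
  force (sweeps L T L.passes) fun K =>
    allBelow L.size fun i => (List.finRange k).all fun s => known K i s

/-- The enumeration of the orbit of `L.base` succeeds, and the elements encoded by `L.loops`
generate the stabiliser, as far as the relators `L.relators` can tell. -/
def check (L : CosetLevel k) (act : Fin k → ℕ → ℕ) : Bool :=
  enumerate act L.modulus (isComplete L act) (Nat.mul L.size (Nat.succ k)) (List.finRange k) 0 1
    L.base 0 (Nat.shiftLeft 1 (Nat.mul 9 (Nat.mod L.base L.modulus)))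

section Soundness

variable {k : ℕ} {Γ : Type*} [Group Γ] {g : Fin k → Γ} {S : Subgroup Γ}
  {V T K n : ℕ}

theorem slot_inj {i j : ℕ} {s t : Fin k} : slot i s = slot j t ↔ i = j ∧ s = t := by
  refine ⟨fun h => ?_, fun ⟨hi, hs⟩ => hi ▸ hs ▸ rfl⟩
  have hk : 0 < k := s.pos
  have h' : k * i + s = k * j + t := h
  have hi : i = j := by
    simpa [Nat.mul_add_div hk, Nat.div_eq_of_lt s.isLt, Nat.div_eq_of_lt t.isLt]
      using congrArg (· / k) h'
  subst hi
  exact ⟨rfl, Fin.ext (Nat.add_left_cancel h')⟩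

theorem known_iff_testBit {i : ℕ} {s : Fin k} : known K i s ↔ K.testBit (slot i s) := by
  have h : K >>> slot i s &&& 1 = (K >>> slot i s) % 2 := Nat.and_one_is_mod _
  rw [Nat.testBit_eq_decide_div_mod_eq, ← Nat.shiftRight_eq_div_pow, decide_eq_true_iff, ← h]
  exact iff_of_eq Nat.beq_eq

theorem known_mark {i j : ℕ} {s t : Fin k} :
    known (mark K i s) j t ↔ known K j t ∨ j = i ∧ t = s := by
  have h : mark K i s = K ||| 1 <<< slot i s := rfl
  rw [known_iff_testBit, known_iff_testBit, h, Nat.testBit_or, Bool.or_eq_true,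
    Nat.one_shiftLeft, Nat.testBit_two_pow, decide_eq_true_iff, ← slot_inj, eq_comm (a := slot i s)]

theorem allBelow_iff {p : ℕ → Bool} : allBelow n p ↔ ∀ i < n, p i := by
  induction n with
  | zero => simp [allBelow]
  | succ n ih => simp only [allBelow, Bool.and_eq_true, ih, Nat.forall_lt_succ_right, and_comm]

theorem exists_of_enumerate {act : Fin k → ℕ → ℕ} {m : ℕ} {ret : ℕ → ℕ → ℕ → Bool}
    {fuel : ℕ} {ls : List (Fin k)} {i n V T I : ℕ}
    (h : enumerate act m ret fuel ls i n V T I) : ∃ V T I, ret V T I := by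
  induction fuel generalizing ls i n V T I with
  | zero => exact ⟨V, T, I, h⟩
  | succ fuel ih =>
    cases ls with
    | nil => exact ih h
    | cons s ls =>
      simp only [enumerate, force_eq, Bool.cond_eq_ite] at h
      split_ifs at h <;> exact ih h

theorem entry_lt_of_descent? {j : ℕ} {s : Fin k} (h : descent? T j = some s) :
    entry T j s < j :=
  Nat.blt_eq.mp (List.find?_some (p := fun s => Nat.blt (entry T j s) j) h)

/-- The left coset of `S` that an equivariant numbering of cosets, with `S` itself as number `0`,
has to assign to the number `j`, read off along the spanning tree. -/
def label (g : Fin k → Γ) (S : Subgroup Γ) (T j : ℕ) : Γ ⧸ S :=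
  match _h : descent? (k := k) T j with
  | none => ((1 : Γ) : Γ ⧸ S)
  | some s => g s • label g S T (entry T j s)
termination_by j
decreasing_by exact entry_lt_of_descent? _h

theorem label_of_descent? {j : ℕ} {s : Fin k} (h : descent? T j = some s) :
    label g S T j = g s • label g S T (entry T j s) := by
  rw [label]
  split <;> simp_all

theorem label_zero : label g S T 0 = ((1 : Γ) : Γ ⧸ S) := by
  rw [label]
  split
  · rfl
  · next h => exact absurd (entry_lt_of_descent? h) (Nat.not_lt_zero _)

/-- Along the edges in `K`, the assignment `label` of cosets is equivariant. -/
def EdgesSound (g : Fin k → Γ) (S : Subgroup Γ) (T n K : ℕ) : Prop :=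
  ∀ i < n, ∀ s : Fin k, known K i s → label g S T (entry T i s) = g s • label g S T i

theorem EdgesSound.mark (hK : EdgesSound g S T n K) {i : ℕ} {s : Fin k}
    (h : label g S T (entry T i s) = g s • label g S T i) :
    EdgesSound g S T n (mark K i s) := by
  intro j hj t ht
  rcases known_mark.1 ht with ht | ⟨rfl, rfl⟩
  · exact hK j hj t ht
  · exact h

/-- The product `u * g s * u⁻¹` encoded by a pair `(u, s)` in `CosetLevel.loops`. -/
def loopElement (g : Fin k → Γ) (p : List (Fin k) × Fin k) : Γ :=
  (p.1.map g).prod * g p.2 * (p.1.map g).prod⁻¹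

theorem loopElement_mem_closure (p : List (Fin k) × Fin k) :
    loopElement g p ∈ Subgroup.closure (Set.range g) := by
  have hletter : ∀ s, g s ∈ Subgroup.closure (Set.range g) := fun s =>
    Subgroup.subset_closure ⟨s, rfl⟩
  have hword : (p.1.map g).prod ∈ Subgroup.closure (Set.range g) :=
    Subgroup.list_prod_mem _ fun x hx => by
      obtain ⟨s, -, rfl⟩ := List.mem_map.1 hx
      exact hletter s
  exact mul_mem (mul_mem hword (hletter _)) (inv_mem hword)

/-- The subgroup that `L` claims to be the stabiliser of its base point. -/
def loopSubgroup (L : CosetLevel k) (g : Fin k → Γ) : Subgroup Γ :=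
  Subgroup.closure (loopElement g '' {p | p ∈ L.loops})

variable [MulAction Γ ℕ]

/-- The tables `V` and `T` describe a finite Schreier graph: `n` distinct points, permuted by the
`g s`, with a spanning tree that is rooted at the point number `0`. -/
structure IsSchreierTable (g : Fin k → Γ) (V T n : ℕ) : Prop where
  entry_lt : ∀ i < n, ∀ s : Fin k, entry T i s < n
  point_entry : ∀ i < n, ∀ s : Fin k, point V (entry T i s) = g s • point V i
  point_inj : ∀ i < n, ∀ j < n, point V i = point V j → i = j
  exists_descent : ∀ i < n, i ≠ 0 → ∃ s : Fin k, descent? T i = some s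

theorem isSchreierTable_of_isTable {act : Fin k → ℕ → ℕ} {L : CosetLevel k} {I : ℕ}
    (hact : ∀ s, ∀ v < 2 ^ L.bits, act s v = g s • v) (h : isTable act L V T I) :
    point V 0 = L.base ∧ IsSchreierTable g V T L.size := by
  simp only [isTable, Bool.and_eq_true, allBelow_iff, force_eq, List.all_eq_true,
    List.mem_finRange, true_imp_iff, Bool.or_eq_true, Nat.beq_eq, Nat.blt_eq,
    Option.isSome_iff_exists] at h
  obtain ⟨hbase, h⟩ := h
  refine ⟨hbase, fun i hi s => ((h i hi).2 s).1, fun i hi s => ?_, fun i hi j hj hij => ?_,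
    fun i hi hi0 => ((h i hi).1.2).resolve_left hi0⟩
  · rw [((h i hi).2 s).2, hact s _ (h i hi).1.1.1]
  · have := (h i hi).1.1.2
    rw [hij, (h j hj).1.1.2] at this
    exact Nat.succ_injective this.symm

theorem IsSchreierTable.entry_entry (hT : IsSchreierTable g V T n) (hg : ∀ s, g s * g s = 1)
    {i : ℕ} (hi : i < n) (s : Fin k) : entry T (entry T i s) s = i := by
  have hj := hT.entry_lt i hi s
  refine hT.point_inj _ (hT.entry_lt _ hj s) _ hi ?_
  rw [hT.point_entry _ hj, hT.point_entry _ hi, smul_smul, hg, one_smul]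

theorem EdgesSound.markBoth (hK : EdgesSound g S T n K) (hT : IsSchreierTable g V T n)
    (hg : ∀ s, g s * g s = 1) {i : ℕ} (hi : i < n) {s : Fin k}
    (h : label g S T (entry T i s) = g s • label g S T i) :
    EdgesSound g S T n (markBoth T K i s) := by
  refine (hK.mark h).mark ?_
  rw [hT.entry_entry hg hi, h, smul_smul, hg, one_smul]

theorem edgesSound_tree (hT : IsSchreierTable g V T n) (hg : ∀ s, g s * g s = 1) {m : ℕ}
    (hm : m ≤ n) : EdgesSound g S T n (tree k T m) := by
  induction m with
  | zero => intro i _ s h; simp [tree, known_iff_testBit] at h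
  | succ j ih =>
    rw [tree, force_eq]
    split
    · exact ih (Nat.le_of_succ_le hm)
    · next s hs =>
      refine (ih (Nat.le_of_succ_le hm)).markBoth hT hg hm ?_
      rw [label_of_descent? hs, smul_smul, hg, one_smul]

theorem EdgesSound.label_of_reaches (hK : EdgesSound g S T n K) (hT : IsSchreierTable g V T n)
    (hg : ∀ s, g s * g s = 1) {w : List (Fin k)} {i z : ℕ} (hi : i < n)
    (h : reaches T K z w i) : label g S T z = (w.map g).prod⁻¹ • label g S T i := by
  induction w generalizing i with
  | nil => simp [← Nat.eq_of_beq_eq_true h]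
  | cons s w ih =>
    simp only [reaches, force_eq, Bool.cond_false_right, Bool.and_eq_true] at h
    rw [ih (hT.entry_lt i hi s) h.2, hK i hi s h.1, List.map_cons, List.prod_cons, mul_inv_rev,
      smul_smul, inv_eq_of_mul_eq_one_left (hg s)]

theorem cons_mem_of_mem_relatorsAt {ws : List (List (Fin k))} {s : Fin k} {w : List (Fin k)}
    (h : w ∈ relatorsAt ws s) : s :: w ∈ ws := by
  obtain ⟨_ | ⟨t, u⟩, hu, h⟩ := List.mem_filterMap.1 h
  · cases h
  · cases hst : Nat.beq s t <;> simp only [hst, cond_false, cond_true, reduceCtorEq,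
      Option.some.injEq] at h
    rwa [Fin.ext (Nat.eq_of_beq_eq_true hst), ← h]

theorem EdgesSound.deduce (hK : EdgesSound g S T n K) (hT : IsSchreierTable g V T n)
    (hg : ∀ s, g s * g s = 1) {ws : List (List (Fin k))} {s : Fin k}
    (hws : ∀ w ∈ ws, g s * (w.map g).prod = 1) {i : ℕ} (hi : i < n) :
    EdgesSound g S T n (deduce T ws K i s) := by
  rw [CosetLevel.deduce, force_eq, Bool.cond_eq_ite, Bool.cond_eq_ite]
  split_ifs with _ h
  · exact hK
  · obtain ⟨w, hw, h⟩ := List.any_eq_true.1 h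
    refine hK.markBoth hT hg hi ?_
    rw [hK.label_of_reaches hT hg hi h, ← eq_inv_of_mul_eq_one_left (hws w hw)]
  · exact hK

theorem EdgesSound.deduceAt (hT : IsSchreierTable g V T n) (hg : ∀ s, g s * g s = 1)
    {ps : List (Fin k × List (List (Fin k)))}
    (hps : ∀ p ∈ ps, ∀ w ∈ p.2, g p.1 * (w.map g).prod = 1) {i : ℕ} (hi : i < n)
    (hK : EdgesSound g S T n K) : EdgesSound g S T n (deduceAt T i ps K) := by
  induction ps generalizing K with
  | nil => exact hK
  | cons p ps ih =>
    rw [List.forall_mem_cons] at hps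
    rw [CosetLevel.deduceAt, force_eq]
    exact ih hps.2 (hK.deduce hT hg hps.1 hi)

theorem EdgesSound.sweep (hT : IsSchreierTable g V T n) (hg : ∀ s, g s * g s = 1)
    {ps : List (Fin k × List (List (Fin k)))}
    (hps : ∀ p ∈ ps, ∀ w ∈ p.2, g p.1 * (w.map g).prod = 1) {m : ℕ} (hm : m ≤ n)
    (hK : EdgesSound g S T n K) : EdgesSound g S T n (sweep T ps n m K) := by
  induction m generalizing K with
  | zero => exact hK
  | succ j ih =>
    rw [CosetLevel.sweep, force_eq]
    exact ih (Nat.le_of_succ_le hm)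
      (hK.deduceAt hT hg hps (Nat.sub_lt (Nat.zero_lt_of_lt hm) j.succ_pos))

theorem EdgesSound.markLoops (hT : IsSchreierTable g V T n) (hg : ∀ s, g s * g s = 1)
    (hn : 0 < n) {ps : List (List (Fin k) × Fin k)} (hps : ∀ p ∈ ps, loopElement g p ∈ S)
    (hloop : ∀ p ∈ ps, entry T (walk T p.1 0) p.2 = walk T p.1 0)
    (hK : EdgesSound g S T n K) : EdgesSound g S T n (markLoops T ps K) := by
  induction ps generalizing K with
  | nil => exact hK
  | cons p ps ih =>
    rw [List.forall_mem_cons] at hps hloop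
    rw [CosetLevel.markLoops, force_eq, force_eq, Bool.cond_eq_ite]
    refine ih hps.2 hloop.2 ?_
    split_ifs with h
    · refine hK.mark ?_
      rw [hloop.1, hK.label_of_reaches hT hg hn h, label_zero, smul_smul,
        MulAction.Quotient.smul_coe, MulAction.Quotient.smul_coe, QuotientGroup.eq]
      simpa [loopElement, mul_assoc] using hps.1
    · exact hK

theorem edgesSound_sweeps {L : CosetLevel k} (hT : IsSchreierTable g V T L.size)
    (hg : ∀ s, g s * g s = 1) (hrel : ∀ w ∈ L.relators, (w.map g).prod = 1)
    (hn : 0 < L.size) (hS : ∀ p ∈ L.loops, loopElement g p ∈ S)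
    (hloop : ∀ p ∈ L.loops, entry T (walk T p.1 0) p.2 = walk T p.1 0) (m : ℕ) :
    EdgesSound g S T L.size (sweeps L T m) := by
  induction m with
  | zero => exact edgesSound_tree hT hg le_rfl
  | succ m ih =>
    rw [sweeps, force_eq, force_eq]
    refine (ih.markLoops hT hg hn hS hloop).sweep hT hg (fun p hp w hw => ?_) le_rfl
    obtain ⟨s, -, rfl⟩ := List.mem_map.1 hp
    exact hrel _ (cons_mem_of_mem_relatorsAt hw)

theorem IsSchreierTable.exists_label_eq (hT : IsSchreierTable g V T n)
    (hg : ∀ s, g s * g s = 1) (hn : 0 < n)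
    (hlabel : ∀ i < n, ∀ s, label g S T (entry T i s) = g s • label g S T i) {x : Γ}
    (hx : x ∈ Subgroup.closure (Set.range g)) :
    ∃ i < n, x • point V 0 = point V i ∧ label g S T i = (x : Γ ⧸ S) := by
  have step : ∀ s, ∀ y : Γ, (∃ i < n, y • point V 0 = point V i ∧ label g S T i = (y : Γ ⧸ S)) →
      ∃ i < n, (g s * y) • point V 0 = point V i ∧ label g S T i = ((g s * y : Γ) : Γ ⧸ S) := by
    rintro s y ⟨i, hi, hy, hc⟩
    refine ⟨entry T i s, hT.entry_lt i hi s, ?_, ?_⟩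
    · rw [hT.point_entry i hi, mul_smul, hy]
    · rw [hlabel i hi, hc, MulAction.Quotient.smul_coe, smul_eq_mul]
  induction hx using Subgroup.closure_induction_left with
  | one => exact ⟨0, hn, one_smul _ _, label_zero⟩
  | mul_left x hx y _ ih =>
    obtain ⟨s, rfl⟩ := hx
    exact step s y ih
  | inv_mul_cancel x hx y _ ih =>
    obtain ⟨s, rfl⟩ := hx
    rw [inv_eq_of_mul_eq_one_left (hg s)]
    exact step s y ih

theorem IsSchreierTable.point_mem_orbit (hT : IsSchreierTable g V T n)
    (hg : ∀ s, g s * g s = 1) {i : ℕ} (hi : i < n) :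
    point V i ∈ MulAction.orbit (Subgroup.closure (Set.range g)) (point V 0) := by
  induction i using Nat.strong_induction_on with
  | _ i ih =>
    rcases eq_or_ne i 0 with rfl | hi0
    · exact MulAction.mem_orbit_self _
    · obtain ⟨s, hs⟩ := hT.exists_descent i hi hi0
      have hj := entry_lt_of_descent? hs
      have hstep : point V i = g s • point V (entry T i s) := by
        rw [hT.point_entry i hi, smul_smul, hg, one_smul]
      rw [hstep]
      exact MulAction.mem_orbit_of_mem_orbit
        (⟨g s, Subgroup.subset_closure ⟨s, rfl⟩⟩ : Subgroup.closure (Set.range g))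
        (ih _ hj (hj.trans hi))

theorem IsSchreierTable.relIndex_stabilizer (hT : IsSchreierTable g V T n)
    (hg : ∀ s, g s * g s = 1) (hn : 0 < n) :
    (MulAction.stabilizer Γ (point V 0)).relIndex (Subgroup.closure (Set.range g)) = n := by
  have horbit : MulAction.orbit (Subgroup.closure (Set.range g)) (point V 0) =
      point V '' Set.Iio n := by
    refine Set.Subset.antisymm ?_ (Set.image_subset_iff.2 fun i hi => hT.point_mem_orbit hg hi)
    rintro _ ⟨x, rfl⟩
    obtain ⟨i, hi, hx, -⟩ := hT.exists_label_eq (S := ⊤) hg hn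
      (fun _ _ _ => QuotientGroup.subsingleton_quotient_top.elim _ _) x.2
    exact ⟨i, hi, hx.symm⟩
  have hinj : Set.InjOn (point V) (Set.Iio n) := fun i hi j hj => hT.point_inj i hi j hj
  have hstab : (MulAction.stabilizer Γ (point V 0)).subgroupOf (Subgroup.closure (Set.range g)) =
    MulAction.stabilizer (Subgroup.closure (Set.range g)) (point V 0) := rfl
  rw [Subgroup.relIndex, hstab, MulAction.index_stabilizer, horbit, hinj.ncard_image,
    Set.ncard_eq_toFinset_card', Set.toFinset_Iio, Nat.card_Iio]

theorem IsSchreierTable.stabilizer_inf_closure_le (hT : IsSchreierTable g V T n)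
    (hg : ∀ s, g s * g s = 1) (hn : 0 < n)
    (hlabel : ∀ i < n, ∀ s, label g S T (entry T i s) = g s • label g S T i) :
    MulAction.stabilizer Γ (point V 0) ⊓ Subgroup.closure (Set.range g) ≤ S := by
  rintro x ⟨hfix, hx⟩
  obtain ⟨i, hi, hxi, hc⟩ := hT.exists_label_eq hg hn hlabel hx
  obtain rfl : 0 = i := hT.point_inj 0 hn i hi (hxi ▸ (MulAction.mem_stabilizer_iff.1 hfix).symm)
  rw [label_zero, QuotientGroup.eq] at hc
  simpa using hc

theorem IsSchreierTable.point_walk (hT : IsSchreierTable g V T n) (hg : ∀ s, g s * g s = 1)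
    (w : List (Fin k)) {i : ℕ} (hi : i < n) :
    walk T w i < n ∧ point V (walk T w i) = (w.map g).prod⁻¹ • point V i := by
  induction w generalizing i with
  | nil => simpa [walk] using hi
  | cons s w ih =>
    obtain ⟨hlt, hpoint⟩ := ih (hT.entry_lt i hi s)
    rw [walk, force_eq, List.map_cons, List.prod_cons, mul_inv_rev,
      inv_eq_of_mul_eq_one_left (hg s), mul_smul, ← hT.point_entry i hi]
    exact ⟨hlt, hpoint⟩

theorem IsSchreierTable.loopElement_mem_stabilizer (hT : IsSchreierTable g V T n)
    (hg : ∀ s, g s * g s = 1) (hn : 0 < n) {p : List (Fin k) × Fin k}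
    (hp : entry T (walk T p.1 0) p.2 = walk T p.1 0) :
    loopElement g p ∈ MulAction.stabilizer Γ (point V 0) := by
  obtain ⟨hlt, hwalk⟩ := hT.point_walk hg p.1 hn
  have hfix := hT.point_entry _ hlt p.2
  rw [hp] at hfix
  rw [MulAction.mem_stabilizer_iff, loopElement, mul_smul, ← hwalk, mul_smul, ← hfix, hwalk,
    smul_inv_smul]

theorem exists_isSchreierTable_of_check {L : CosetLevel k} {act : Fin k → ℕ → ℕ}
    (hact : ∀ s, ∀ v < 2 ^ L.bits, act s v = g s • v) (h : L.check act) :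
    ∃ V T, IsSchreierTable g V T L.size ∧ point V 0 = L.base ∧ 0 < L.size ∧
      (∀ p ∈ L.loops, entry T (walk T p.1 0) p.2 = walk T p.1 0) ∧
      ∀ i < L.size, ∀ s : Fin k, known (sweeps L T L.passes) i s := by
  obtain ⟨V, T, I, h⟩ := exists_of_enumerate h
  simp only [isComplete, Bool.and_eq_true, force_eq, allBelow_iff, List.all_eq_true, Nat.beq_eq,
    List.mem_finRange, true_imp_iff, Nat.blt_eq] at h
  obtain ⟨⟨⟨hn, htable⟩, hloops⟩, hknown⟩ := h
  obtain ⟨hbase, hT⟩ := isSchreierTable_of_isTable hact htable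
  exact ⟨V, T, hT, hbase, hn, hloops, hknown⟩

theorem stabilizer_and_relIndex_of_check {L : CosetLevel k} {act : Fin k → ℕ → ℕ}
    (hact : ∀ s, ∀ v < 2 ^ L.bits, act s v = g s • v) (hg : ∀ s, g s * g s = 1)
    (hrel : ∀ w ∈ L.relators, (w.map g).prod = 1) (h : L.check act) :
    MulAction.stabilizer Γ L.base ⊓ Subgroup.closure (Set.range g) = L.loopSubgroup g ∧
      (L.loopSubgroup g).relIndex (Subgroup.closure (Set.range g)) = L.size := by
  obtain ⟨V, T, hT, hbase, hn, hloops, hknown⟩ := exists_isSchreierTable_of_check hact h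
  have hmem : ∀ p ∈ L.loops, loopElement g p ∈ L.loopSubgroup g := fun p hp =>
    Subgroup.subset_closure ⟨p, hp, rfl⟩
  have hstab : MulAction.stabilizer Γ L.base ⊓ Subgroup.closure (Set.range g) =
      L.loopSubgroup g := by
    rw [← hbase]
    refine le_antisymm (hT.stabilizer_inf_closure_le hg hn fun i hi s =>
      edgesSound_sweeps hT hg hrel hn hmem hloops L.passes i hi s (hknown i hi s)) ?_
    rw [loopSubgroup, Subgroup.closure_le]
    rintro _ ⟨p, hp, rfl⟩
    exact ⟨hT.loopElement_mem_stabilizer hg hn (hloops p hp), loopElement_mem_closure p⟩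
  refine ⟨hstab, ?_⟩
  rw [← hstab, Subgroup.inf_relIndex_right, ← hbase, hT.relIndex_stabilizer hg hn]

end Soundness

end CosetLevel
/-- The reflection in the highest root `2e + x + y + z` of the diagram of type `D₄` with centre `e`
and leaves `x`, `y`, `z`. -/
def highestReflection {G : Type*} [Group G] (e x y z : G) : G := e * x * y * z * e * z * y * x * e

theorem map_highestReflection {G H : Type*} [Group G] [Group H] (φ : G →* H) (e x y z : G) :
    φ (highestReflection e x y z) = highestReflection (φ e) (φ x) (φ y) (φ z) := by
  simp only [highestReflection, map_mul]

/-- The relations of a Coxeter diagram with simple edges from the centre `e` to the leaves `p i`. -/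
structure IsCoxeterStar {G ι : Type*} [Group G] (e : G) (p : ι → G) : Prop where
  center_mul_self : e * e = 1
  leaf_mul_self : ∀ i, p i * p i = 1
  leaf_comm : ∀ i j, p i * p j = p j * p i
  braid : ∀ i, p i * e * p i = e * p i * e

namespace IsCoxeterStar

section HighestReflection

variable {G ι : Type*} [Group G] {e : G} {p : ι → G} (hs : IsCoxeterStar e p) (i j k l : ι)

include hs

theorem highestReflection_mul_self :
    highestReflection e (p i) (p j) (p k) * highestReflection e (p i) (p j) (p k) = 1 := by
  have := hs.center_mul_self
  have := hs.leaf_mul_self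
  unfold highestReflection
  grind

theorem highestReflection_eq_conj_leaf :
    highestReflection e (p i) (p j) (p k) =
      e * p i * p j * e * p k * (e * p i * p j * e)⁻¹ := by
  rw [eq_mul_inv_iff_mul_eq, highestReflection]
  have := hs.center_mul_self
  have := hs.leaf_mul_self
  have := hs.leaf_comm
  have := hs.braid k
  grind

theorem highestReflection_eq_conj_other_leaf :
    highestReflection e (p i) (p j) (p k) =
      e * p i * p j * p k * p l * e * p l * (e * p i * p j * p k * p l * e)⁻¹ := by
  rw [eq_mul_inv_iff_mul_eq, highestReflection]
  have := hs.center_mul_self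
  have := hs.leaf_mul_self
  have := hs.leaf_comm
  have := hs.braid l
  grind

theorem highestReflection_leaf_self : highestReflection e (p i) (p j) (p i) = p j := by
  have := hs.center_mul_self
  have := hs.leaf_mul_self
  have := hs.leaf_comm
  have := hs.braid
  unfold highestReflection
  grind

theorem commute_leaf_highestReflection :
    Commute (p k) (highestReflection e (p i) (p j) (p k)) := by
  have := hs.center_mul_self
  have := hs.leaf_mul_self
  have := hs.leaf_comm
  have := hs.braid
  unfold Commute SemiconjBy highestReflection
  grind

theorem highestReflection_rotate :
    highestReflection e (p i) (p j) (p k) = highestReflection e (p j) (p k) (p i) := by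
  have := hs.leaf_comm
  unfold highestReflection
  grind

end HighestReflection

section AffineD4

variable {G : Type*} [Group G] {e : G} {p : Fin 4 → G}

/-- The highest reflection of the `D₄` subdiagram of a star with four leaves that omits leaf `i`. -/
def oppositeReflection (e : G) (p : Fin 4 → G) (i : Fin 4) : G :=
  highestReflection e (p (i.succAbove 0)) (p (i.succAbove 1)) (p (i.succAbove 2))

theorem commute_leaf_oppositeReflection (hs : IsCoxeterStar e p)
    (h : ∀ i, Commute (p i) (oppositeReflection e p i)) (i j : Fin 4) :
    Commute (p j) (oppositeReflection e p i) := by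
  rcases eq_or_ne j i with rfl | hj
  · exact h j
  obtain ⟨k, rfl⟩ := Fin.exists_succAbove_eq hj
  have hrot := hs.highestReflection_rotate
  unfold oppositeReflection
  fin_cases k
  · rw [hrot]; exact hs.commute_leaf_highestReflection _ _ _
  · rw [← hrot]; exact hs.commute_leaf_highestReflection _ _ _
  · exact hs.commute_leaf_highestReflection _ _ _

theorem prod_eq_one_of_conj_center {c : G} {t : Fin 4 → G} (hs : IsCoxeterStar e p)
    (hc : c = e * (p 0 * p 1 * p 2 * p 3) * e * (p 0 * p 1 * p 2 * p 3))
    (hpt : ∀ i j, Commute (p i) (t j)) (htt : ∀ i, t i * t i = 1)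
    (het : ∀ i, e * t i * e = p i * c * p i) (hct : ∀ i, p i * c * p i = c * t i) :
    t 0 * t 1 * t 2 * t 3 = 1 := by
  have hp := hs.leaf_mul_self
  have hP : p 0 * p 1 * p 2 * p 3 = p 3 * p 2 * p 1 * p 0 ∧
      p 0 * p 1 * p 2 * p 3 * (p 0 * p 1 * p 2 * p 3) = 1 := by
    have := hs.leaf_comm
    clear * - hp this
    grind
  have hcc : c * c = 1 := by
    have := hs.center_mul_self
    have := het 0
    have := htt 0
    have := hp 0
    clear hc hP hpt het hct htt hp
    grind
  have hinv : p 0 * p 1 * p 2 * p 3 * c * (p 3 * p 2 * p 1 * p 0) = c := by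
    have := hs.center_mul_self
    rw [← hP.1]
    replace hP := hP.2
    generalize p 0 * p 1 * p 2 * p 3 = P at *
    clear * - hc hcc hP this
    grind
  have hmul : p 0 * p 1 * p 2 * p 3 * c * (p 3 * p 2 * p 1 * p 0) =
      c * (t 0 * t 1 * t 2 * t 3) := by
    have hstep (i : Fin 4) (x : G) (hx : Commute (p i) x) :
        p i * (c * x) * p i = c * (t i * x) := by
      rw [← mul_assoc (c), ← hct, ← mul_assoc, mul_assoc _ (p i) x, hx.eq, ← mul_assoc]
    calc _ = p 0 * (p 1 * (p 2 * (p 3 * (c * 1) * p 3) * p 2) * p 1) * p 0 := by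
          simp only [mul_assoc, mul_one]
      _ = _ := by
        have h3 (i) := (hpt i 3).mul_right (.one_right _)
        have h2 (i) := (hpt i 2).mul_right (h3 i)
        rw [hstep 3 1 (.one_right _), hstep 2 _ (h3 2), hstep 1 _ (h2 1),
          hstep 0 _ ((hpt 0 1).mul_right (h2 0))]
        simp only [mul_assoc, mul_one]
  exact mul_left_cancel ((hmul.symm.trans hinv).trans (mul_one c).symm)

theorem conj_center_leaf_mul {x q h : G} (he : e * e = 1) (hx : x * x = 1) (hq : q * q = 1)
    (hxq : x * q = q * x) (hbraid : x * e * x = e * x * e) (hh : h = e * q * e * q * e)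
    (hqh : q * h = h * q) :
    e * (x * h) * e = x * (e * (x * q) * e * (x * q)) * x ∧
      x * (e * (x * q) * e * (x * q)) * x = e * (x * q) * e * (x * q) * (x * h) := by
  subst hh
  constructor <;> grind

theorem conj_center_leaf_mul_oppositeReflection (hs : IsCoxeterStar e p)
    (h : ∀ i, Commute (p i) (oppositeReflection e p i)) {P : G} (hP : P = p 0 * p 1 * p 2 * p 3)
    (i : Fin 4) :
    e * (p i * oppositeReflection e p i) * e = p i * (e * P * e * P) * p i ∧
      p i * (e * P * e * P) * p i = e * P * e * P * (p i * oppositeReflection e p i) := by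
  have hcomm := hs.leaf_comm
  have hp := hs.leaf_mul_self
  have hopp := hs.commute_leaf_oppositeReflection h i
  simp only [Commute, SemiconjBy] at hopp
  obtain ⟨j, k, l, hr, rfl⟩ : ∃ j k l,
      oppositeReflection e p i = highestReflection e (p j) (p k) (p l) ∧
        P = p i * (p j * p k * p l) := by
    refine ⟨_, _, _, rfl, ?_⟩
    clear hopp
    subst hP
    fin_cases i <;> simp [Fin.succAbove] <;> grind
  have hh : oppositeReflection e p i = e * (p j * p k * p l) * e * (p j * p k * p l) * e := by
    rw [hr, highestReflection]
    clear * - hcomm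
    grind
  clear hr hP
  refine conj_center_leaf_mul hs.center_mul_self (hp i) ?_ ?_ (hs.braid i) hh ?_ <;>
    clear hh <;> generalize oppositeReflection e p i = r at hopp <;> grind

/-- In the affine Weyl group, `t i = p i * oppositeReflection e p i` is the translation by the
coroot of the leaf `p i`, and `c = e P e P` with `P = p 0 p 1 p 2 p 3` is the translation by the
coroot of `e`, up to signs, so that the product of the `t i` is a power `c ^ ± 2`. If each `p i`
commutes with its opposite reflection, then `t i` and hence its conjugate `c` are involutions. -/
theorem prod_leaf_mul_oppositeReflection (hs : IsCoxeterStar e p)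
    (h : ∀ i, Commute (p i) (oppositeReflection e p i)) :
    p 0 * oppositeReflection e p 0 * (p 1 * oppositeReflection e p 1) *
      (p 2 * oppositeReflection e p 2) * (p 3 * oppositeReflection e p 3) = 1 := by
  have hconj := hs.conj_center_leaf_mul_oppositeReflection h rfl
  refine hs.prod_eq_one_of_conj_center (t := fun i => p i * oppositeReflection e p i) rfl
    (fun i j => Commute.mul_right (hs.leaf_comm i j) (hs.commute_leaf_oppositeReflection h j i))
    (fun i => ?_) (fun i => (hconj i).1) fun i => (hconj i).2
  have hr := hs.highestReflection_mul_self (i.succAbove 0) (i.succAbove 1) (i.succAbove 2)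
  have hp := hs.leaf_mul_self i
  have hi := (h i).eq
  unfold oppositeReflection at hi ⊢
  clear * - hr hp hi
  grind

end AffineD4

end IsCoxeterStar

/-- The defining relations of `Theta`, for a family of elements `g` of an arbitrary group. -/
structure IsThetaFamily {G : Type*} [Group G] (g : Fin 6 → G) : Prop where
  pow_cox6 : ∀ i j, (g i * g j) ^ cox6 i j = 1
  pow_four : (g 0 * (g 1 * g 2 * g 3 * g 2 * g 1) * (g 4 * g 3 * g 2 * g 3 * g 4)) ^ 4 = 1
  pow_three : (g 5 * (g 4 * g 3 * g 2 * g 3 * g 4) * (g 1 * g 2 * g 3 * g 2 * g 1) *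
    (g 4 * g 3 * g 2 * g 3 * g 4)) ^ 3 = 1

theorem isThetaFamily_th : IsThetaFamily th where
  pow_cox6 i j := by
    have h : (w i * w j) ^ cox6 i j = 1 := by
      simpa [w, PresentedGroup.of] using
        PresentedGroup.one_of_mem (rels := rels6) (Set.mem_range_self (i, j))
    exact congrArg (QuotientGroup.mk : W → Theta) h
  pow_four := (QuotientGroup.eq_one_iff ((w 0 * sg * tu) ^ 4)).2
    (Subgroup.subset_normalClosure (Set.mem_insert _ _))
  pow_three := (QuotientGroup.eq_one_iff ((w 5 * tu * sg * tu) ^ 3)).2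
    (Subgroup.subset_normalClosure (Set.mem_insert_of_mem _ rfl))

/-- The words spelling, for `g = (a, b, c, d, e, f)`, the leaves `d ^ (cba)`, `d ^ (cb)`, `d ^ c`,
`d`, `f` and finally the centre `e` of a Coxeter star. -/
def starWord : Fin 6 → List (Fin 6)
  | 0 => [0, 1, 2, 3, 2, 1, 0]
  | 1 => [1, 2, 3, 2, 1]
  | 2 => [2, 3, 2]
  | 3 => [3]
  | 4 => [5]
  | 5 => [4]

/-- The elements spelled by `starWord`. -/
def starGen {G : Type*} [Group G] (g : Fin 6 → G) (s : Fin 6) : G := ((starWord s).map g).prod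

/-- The four leaves of the star that are permuted by `⟨a, b, c⟩`. -/
def innerLeaf {G : Type*} [Group G] (g : Fin 6 → G) (i : Fin 4) : G := starGen g (i.castAdd 2)

/-- The five leaves of the star. -/
def starLeaf {G : Type*} [Group G] (g : Fin 6 → G) (i : Fin 5) : G := starGen g i.castSucc

namespace IsThetaFamily

variable {G : Type*} [Group G] {g : Fin 6 → G} (hg : IsThetaFamily g)

include hg

theorem mul_self (i : Fin 6) : g i * g i = 1 := by
  simpa [cox6] using hg.pow_cox6 i i

theorem mul_comm_of_cox6 {i j : Fin 6} (h : cox6 i j = 2) : g i * g j = g j * g i := by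
  have := hg.mul_self
  have := h ▸ hg.pow_cox6 i j
  rw [sq] at this
  grind

theorem braid_of_cox6 {i j : Fin 6} (h : cox6 i j = 3) : g i * g j * g i = g j * g i * g j := by
  have := hg.mul_self
  have := h ▸ hg.pow_cox6 i j
  rw [_root_.pow_three] at this
  grind

/-- The homomorphism out of `W` given by its presentation. -/
noncomputable def liftCoxeter : W →* G :=
  PresentedGroup.toGroup (f := g) <| by
    rintro _ ⟨⟨i, j⟩, rfl⟩
    simpa using hg.pow_cox6 i j

theorem liftCoxeter_w (i : Fin 6) : hg.liftCoxeter (w i) = g i := PresentedGroup.toGroup.of _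

/-- The homomorphism out of `Theta` given by its presentation. -/
noncomputable def lift : Theta →* G :=
  QuotientGroup.lift _ hg.liftCoxeter <| by
    refine Subgroup.normalClosure_le_normal ?_
    rintro _ (rfl | rfl)
    · simpa [MonoidHom.mem_ker, sg, tu, liftCoxeter_w] using hg.pow_four
    · simpa [MonoidHom.mem_ker, sg, tu, liftCoxeter_w] using hg.pow_three

theorem lift_th (i : Fin 6) : hg.lift (th i) = g i := hg.liftCoxeter_w i

theorem conj_innerLeaf (m : Fin 3) (i : Fin 4) :
    g (m.castAdd 3) * innerLeaf g i * g (m.castAdd 3) =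
      innerLeaf g (Equiv.swap m.castSucc m.succ i) := by
  have := hg.mul_self 0
  have := hg.mul_self 1
  have := hg.mul_self 2
  have : g 0 * g 2 = g 2 * g 0 := hg.mul_comm_of_cox6 (by decide)
  have : g 0 * g 3 = g 3 * g 0 := hg.mul_comm_of_cox6 (by decide)
  have : g 1 * g 3 = g 3 * g 1 := hg.mul_comm_of_cox6 (by decide)
  have : g 0 * g 1 * g 0 = g 1 * g 0 * g 1 := hg.braid_of_cox6 (by decide)
  have : g 1 * g 2 * g 1 = g 2 * g 1 * g 2 := hg.braid_of_cox6 (by decide)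
  clear hg
  fin_cases m <;> fin_cases i <;>
    simp [Equiv.swap_apply_def, innerLeaf, starGen, starWord] <;> grind

theorem exists_mulAut_innerLeaf_eq (σ : Equiv.Perm (Fin 4)) :
    ∃ φ : MulAut G, φ (g 4) = g 4 ∧ φ (g 5) = g 5 ∧
      ∀ i, φ (innerLeaf g i) = innerLeaf g (σ i) := by
  induction σ using Submonoid.induction_of_closure_eq_top_left
    (Equiv.Perm.mclosure_swap_castSucc_succ 3) with
  | one => exact ⟨1, by simp⟩
  | mul_left σ hσ ρ ih =>
    obtain ⟨m, rfl⟩ := hσ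
    obtain ⟨φ, he, hf, hφ⟩ := ih
    have hinv : (g (m.castAdd 3))⁻¹ = g (m.castAdd 3) :=
      inv_eq_of_mul_eq_one_right (hg.mul_self _)
    have hfix (j : Fin 6) (h : cox6 (m.castAdd 3) j = 2) :
        MulAut.conj (g (m.castAdd 3)) (g j) = g j := by
      rw [MulAut.conj_apply, hg.mul_comm_of_cox6 h, mul_inv_cancel_right]
    refine ⟨MulAut.conj (g (m.castAdd 3)) * φ, ?_, ?_, fun i => ?_⟩
    · rw [MulAut.mul_apply, he, hfix 4 (by fin_cases m <;> rfl)]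
    · rw [MulAut.mul_apply, hf, hfix 5 (by fin_cases m <;> rfl)]
    · rw [MulAut.mul_apply, hφ, MulAut.conj_apply, hinv, hg.conj_innerLeaf, Equiv.Perm.mul_apply]

theorem isCoxeterStar_innerLeaf : IsCoxeterStar (g 4) (innerLeaf g) where
  center_mul_self := hg.mul_self 4
  leaf_mul_self i := by
    obtain ⟨φ, -, -, hφ⟩ := hg.exists_mulAut_innerLeaf_eq (Equiv.swap 3 i)
    have h : innerLeaf g 3 * innerLeaf g 3 = 1 := by
      simpa [innerLeaf, starGen, starWord] using hg.mul_self 3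
    simpa only [map_mul, map_one, hφ, Equiv.swap_apply_left] using congrArg φ h
  leaf_comm i j := by
    rcases eq_or_ne i j with rfl | hij
    · rfl
    obtain ⟨σ, rfl, rfl⟩ : ∃ σ : Equiv.Perm (Fin 4), σ 2 = i ∧ σ 3 = j := by
      clear hg; decide +revert
    obtain ⟨φ, -, -, hφ⟩ := hg.exists_mulAut_innerLeaf_eq σ
    have h : innerLeaf g 2 * innerLeaf g 3 = innerLeaf g 3 * innerLeaf g 2 := by
      have hpow : (g 2 * g 3) ^ 4 = 1 := hg.pow_cox6 2 3
      have h2 := hg.mul_self 2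
      have h3 := hg.mul_self 3
      rw [show innerLeaf g 2 = g 2 * g 3 * g 2 by simp [innerLeaf, starGen, starWord, mul_assoc],
        show innerLeaf g 3 = g 3 by simp [innerLeaf, starGen, starWord]]
      simp only [pow_succ, pow_zero, one_mul] at hpow
      clear * - h2 h3 hpow
      grind
    simpa only [map_mul, hφ] using congrArg φ h
  braid i := by
    obtain ⟨φ, he, -, hφ⟩ := hg.exists_mulAut_innerLeaf_eq (Equiv.swap 3 i)
    have h : innerLeaf g 3 * g 4 * innerLeaf g 3 = g 4 * innerLeaf g 3 * g 4 := by
      simpa [innerLeaf, starGen, starWord] using hg.braid_of_cox6 (i := 3) (j := 4) rfl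
    simpa only [map_mul, hφ, he, Equiv.swap_apply_left] using congrArg φ h

theorem isCoxeterStar_starLeaf : IsCoxeterStar (g 4) (starLeaf g) := by
  have hs := hg.isCoxeterStar_innerLeaf
  have hfe : g 5 * g 4 * g 5 = g 4 * g 5 * g 4 := hg.braid_of_cox6 rfl
  have hf (i : Fin 4) : innerLeaf g i * g 5 = g 5 * innerLeaf g i := by
    obtain ⟨φ, -, hf, hφ⟩ := hg.exists_mulAut_innerLeaf_eq (Equiv.swap 3 i)
    have h : innerLeaf g 3 * g 5 = g 5 * innerLeaf g 3 := by
      simpa [innerLeaf, starGen, starWord] using hg.mul_comm_of_cox6 (i := 3) (j := 5) rfl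
    simpa only [map_mul, hφ, hf, Equiv.swap_apply_left] using congrArg φ h
  have hinner (i : Fin 4) : starLeaf g i.castSucc = innerLeaf g i := rfl
  have hlast : starLeaf g (Fin.last 4) = g 5 := by
    change ([5].map g).prod = g 5
    simp
  constructor
  · exact hs.center_mul_self
  · intro i
    induction i using Fin.lastCases with
    | last => rw [hlast, hg.mul_self]
    | cast i => rw [hinner, hs.leaf_mul_self]
  · intro i j
    induction i using Fin.lastCases <;> induction j using Fin.lastCases <;>
      simp only [hlast, hinner, hf, hs.leaf_comm]
  · intro i
    induction i using Fin.lastCases with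
    | last => rw [hlast, hfe]
    | cast i => rw [hinner, hs.braid]

theorem exists_mulAut_oppositeReflection_eq (i : Fin 4) :
    ∃ φ : MulAut G, φ (innerLeaf g 0) = innerLeaf g i ∧ φ (g 5) = g 5 ∧
      φ (IsCoxeterStar.oppositeReflection (g 4) (innerLeaf g) 0) =
        IsCoxeterStar.oppositeReflection (g 4) (innerLeaf g) i := by
  obtain ⟨φ, he, hf, hφ⟩ := hg.exists_mulAut_innerLeaf_eq i.cycleRange.symm
  refine ⟨φ, by rw [hφ, Fin.cycleRange_symm_zero], hf, ?_⟩
  have h :=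
    map_highestReflection φ.toMonoidHom (g 4) (innerLeaf g 1) (innerLeaf g 2) (innerLeaf g 3)
  change φ _ = highestReflection (φ _) (φ _) (φ _) (φ _) at h
  rw [he, hφ, hφ, hφ] at h
  have hsucc (j : Fin 3) := Fin.cycleRange_symm_succ i j
  simpa [IsCoxeterStar.oppositeReflection, ← hsucc] using h

theorem conj_tau_innerLeaf_one :
    g 4 * g 3 * g 2 * g 3 * g 4 * innerLeaf g 1 * (g 4 * g 3 * g 2 * g 3 * g 4) =
      IsCoxeterStar.oppositeReflection (g 4) (innerLeaf g) 0 := by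
  have hs := hg.isCoxeterStar_innerLeaf
  have h3 : innerLeaf g 3 = g 3 := by simp [innerLeaf, starGen, starWord]
  have hc1 : g 2 * innerLeaf g 1 * g 2 = innerLeaf g 1 := hg.conj_innerLeaf 2 1
  have hc2 : g 2 * innerLeaf g 2 * g 2 = innerLeaf g 3 := hg.conj_innerLeaf 2 2
  have hce : g 2 * g 4 = g 4 * g 2 := hg.mul_comm_of_cox6 rfl
  have hc := hg.mul_self 2
  have h12 := hs.leaf_comm 1 2
  have h13 := hs.leaf_comm 1 3
  have h23 := hs.leaf_comm 2 3
  have hbraid := hs.braid 1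
  change _ = highestReflection (g 4) (innerLeaf g 1) (innerLeaf g 2) (innerLeaf g 3)
  rw [← h3, highestReflection]
  generalize innerLeaf g 1 = x at *
  generalize innerLeaf g 2 = y at *
  generalize innerLeaf g 3 = z at *
  have hzcz : z * g 2 * z = z * y * g 2 := by clear * - hc hc2; grind
  have hzcz' : z * g 2 * z = g 2 * y * z := by clear * - hc hc2; grind
  have hcx : x * g 2 = g 2 * x := by clear * - hc hc1; grind
  calc _ = g 4 * (z * g 2 * z) * g 4 * x * g 4 * (z * g 2 * z) * g 4 := by simp only [mul_assoc]
    _ = g 4 * (z * y * g 2) * g 4 * x * g 4 * (g 2 * y * z) * g 4 := by rw [← hzcz, ← hzcz']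
    _ = g 4 * z * y * g 4 * x * g 4 * y * z * g 4 := by clear * - hc hce hcx; grind
    _ = _ := by clear * - h12 h13 h23 hbraid; grind

theorem innerLeaf_mul_oppositeReflection_sq (i : Fin 4) :
    (innerLeaf g i * IsCoxeterStar.oppositeReflection (g 4) (innerLeaf g) i) ^ 2 = 1 := by
  obtain ⟨φ, hi, -, hopp⟩ := hg.exists_mulAut_oppositeReflection_eq i
  rw [← hi, ← hopp, ← map_mul, ← map_pow, EmbeddingLike.map_eq_one_iff, ← hg.conj_tau_innerLeaf_one]
  have hpow := hg.pow_four
  have hp1 : innerLeaf g 1 = g 1 * g 2 * g 3 * g 2 * g 1 := by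
    simp [innerLeaf, starGen, starWord, mul_assoc]
  have hp0 : g 0 * innerLeaf g 1 * g 0 = innerLeaf g 0 := hg.conj_innerLeaf 0 1
  have hcomm : g 0 * (g 4 * g 3 * g 2 * g 3 * g 4) = g 4 * g 3 * g 2 * g 3 * g 4 * g 0 := by
    have h2 : g 0 * g 2 = g 2 * g 0 := hg.mul_comm_of_cox6 rfl
    have h3 : g 0 * g 3 = g 3 * g 0 := hg.mul_comm_of_cox6 rfl
    have h4 : g 0 * g 4 = g 4 * g 0 := hg.mul_comm_of_cox6 rfl
    clear * - h2 h3 h4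
    grind
  rw [← hp1, pow_mul _ 2 2] at hpow
  rw [← hp0, ← hpow, sq (g 0 * _ * _)]
  congr 1
  generalize g 4 * g 3 * g 2 * g 3 * g 4 = t at hcomm ⊢
  clear * - hcomm
  grind

theorem mul_oppositeReflection_pow_three (i : Fin 4) :
    (g 5 * IsCoxeterStar.oppositeReflection (g 4) (innerLeaf g) i) ^ 3 = 1 := by
  obtain ⟨φ, -, hf, hopp⟩ := hg.exists_mulAut_oppositeReflection_eq i
  rw [← hf, ← hopp, ← map_mul, ← map_pow, EmbeddingLike.map_eq_one_iff, ← hg.conj_tau_innerLeaf_one,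
    ← hg.pow_three]
  simp [innerLeaf, starGen, starWord, mul_assoc]

end IsThetaFamily
/-- The `𝔽₂`-linear map with columns `M`, vectors over `𝔽₂` being encoded by the binary digits of
natural numbers and added by `^^^`. -/
def linApply : List ℕ → ℕ → ℕ
  | [], _ => 0
  | c :: M, v => Nat.xor (Nat.mul (Nat.land v 1) c) (linApply M (Nat.div v 2))

/-- Linearity over `𝔽₂` for the encoding of vectors by binary digits. -/
def IsXorLinear (f : ℕ → ℕ) : Prop := ∀ u v, f (u ^^^ v) = f u ^^^ f v

section XorLinear

variable {f f' : ℕ → ℕ}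

theorem isXorLinear_linApply (M : List ℕ) : IsXorLinear (linApply M) := by
  induction M with
  | nil => exact fun _ _ => (Nat.xor_self 0).symm
  | cons c M ih =>
    intro u v
    have hbit : ((u ^^^ v) &&& 1) * c = (u &&& 1) * c ^^^ (v &&& 1) * c := by
      rw [Nat.and_xor_distrib_right, Nat.and_one_is_mod, Nat.and_one_is_mod]
      rcases Nat.mod_two_eq_zero_or_one u with hu | hu <;>
        rcases Nat.mod_two_eq_zero_or_one v with hv | hv <;> simp [hu, hv]
    change ((u ^^^ v) &&& 1) * c ^^^ linApply M ((u ^^^ v) / 2) =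
      ((u &&& 1) * c ^^^ linApply M (u / 2)) ^^^ ((v &&& 1) * c ^^^ linApply M (v / 2))
    rw [hbit, Nat.xor_div_two, ih]
    ac_rfl

theorem linApply_two_pow_of_length_le {M : List ℕ} {i : ℕ} (h : M.length ≤ i) :
    linApply M (2 ^ i) = 0 := by
  induction M generalizing i with
  | nil => rfl
  | cons c M ih =>
    obtain ⟨j, rfl⟩ := Nat.exists_eq_add_of_le' ((Nat.le_add_left 1 M.length).trans h)
    change (2 ^ (j + 1) &&& 1) * c ^^^ linApply M (2 ^ (j + 1) / 2) = 0
    rw [pow_succ, Nat.mul_div_cancel _ two_pos, ih (by simpa using h), Nat.and_one_is_mod]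
    simp

theorem IsXorLinear.map_zero (hf : IsXorLinear f) : f 0 = 0 := by
  simpa using hf 0 0

theorem IsXorLinear.comp (hf : IsXorLinear f) (hf' : IsXorLinear f') : IsXorLinear (f ∘ f') :=
  fun u v => by simp only [Function.comp_apply, hf' u v, hf (f' u) (f' v)]

theorem IsXorLinear.xor (hf : IsXorLinear f) (hf' : IsXorLinear f') :
    IsXorLinear fun v => f v ^^^ f' v := fun u v => by
  simp only [hf u v, hf' u v]
  ac_rfl

/-- The columns of `f` on the first `n` coordinate vectors. -/
def columns (f : ℕ → ℕ) (n : ℕ) : List ℕ := (List.range n).map fun i => f (2 ^ i)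

theorem linApply_columns (hf : IsXorLinear f) {n v : ℕ} (hv : v < 2 ^ n) :
    linApply (columns f n) v = f v := by
  induction n generalizing f v with
  | zero => rw [Nat.lt_one_iff.1 hv, hf.map_zero]; rfl
  | succ n ih =>
    have hdouble : IsXorLinear (f ∘ (2 * ·)) :=
      hf.comp fun u v => by
        simpa [Nat.shiftLeft_eq, mul_comm] using Nat.shiftLeft_xor_distrib (i := 1)
    have hcols : columns f (n + 1) = f 1 :: columns (f ∘ (2 * ·)) n := by
      simp [columns, List.range_succ_eq_map, pow_succ']
    have hsplit : (v &&& 1) ^^^ 2 * (v / 2) = v := by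
      refine Nat.eq_of_testBit_eq fun i => ?_
      cases i <;> simp [Nat.testBit_succ, Nat.and_one_is_mod, Nat.xor_div_two]
    have hbit : f (v &&& 1) = (v &&& 1) * f 1 := by
      rw [Nat.and_one_is_mod]
      rcases Nat.mod_two_eq_zero_or_one v with h | h <;> simp [h, hf.map_zero]
    rw [hcols]
    change (v &&& 1) * f 1 ^^^ linApply (columns (f ∘ (2 * ·)) n) (v / 2) = f v
    rw [ih hdouble (by omega), ← hbit, Function.comp_apply, ← hf, hsplit]

theorem IsXorLinear.ext (hf : IsXorLinear f) (hf' : IsXorLinear f')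
    (h : ∀ i, f (2 ^ i) = f' (2 ^ i)) : f = f' := by
  funext v
  rw [← linApply_columns hf v.lt_two_pow_self, ← linApply_columns hf' v.lt_two_pow_self]
  simp only [columns, h]

end XorLinear

/-- The block matrix on bytes whose columns are, for each pair `(M, t)` of the list in turn, the
columns `M` moved to byte `t`. -/
def blockColumns (l : List (List ℕ × ℕ)) : List ℕ := l.flatMap fun p => p.1.map (· <<< (8 * p.2))

/-- The columns of octonion conjugation: it swaps the diagonal entries of a Zorn vector matrix. -/
def conjColumns : List ℕ := [2, 1, 4, 8, 16, 32, 64, 128]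

/-- The columns of the matrices by which the generators act on `𝔽₂³²`. The first three bytes
`x`, `y`, `z` are split octonions, the bits of a byte being the entries `α`, `β`, `u`, `v` of the
Zorn vector matrix `[[α, u], [v, β]]` with `u, v ∈ 𝔽₂³`; the last byte consists of four blocks of
two bits. The generators `a`, `b`, `c` permute these blocks as adjacent transpositions and act on
each octonion through `u ↦ A u`, `v ↦ A⁻ᵀ v` for some `A ∈ GL₃(𝔽₂)`; `d` maps `(x, y, z)` to
`(s x̄ s, conj (z s), conj (s y))` for an octonion `s` of norm `1`; and `e`, `f` map it to
`(z̄, ȳ, x̄)` and `(x̄, z̄, ȳ)`. -/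
def genColumns : Fin 6 → List ℕ
  | 0 => blockColumns [([1, 2, 28, 8, 16, 32, 96, 160], 0), ([1, 2, 28, 8, 16, 32, 96, 160], 1),
      ([1, 2, 28, 8, 16, 32, 96, 160], 2), ([4, 8, 1, 2, 16, 32, 64, 128], 3)]
  | 1 => blockColumns [([1, 2, 8, 4, 16, 64, 32, 128], 0), ([1, 2, 8, 4, 16, 64, 32, 128], 1),
      ([1, 2, 8, 4, 16, 64, 32, 128], 2), ([1, 2, 16, 32, 4, 8, 64, 128], 3)]
  | 2 => blockColumns [([1, 2, 4, 16, 8, 32, 128, 64], 0), ([1, 2, 4, 16, 8, 32, 128, 64], 1),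
      ([1, 2, 4, 16, 8, 32, 128, 64], 2), ([1, 2, 4, 8, 64, 128, 16, 32], 3)]
  | 3 => blockColumns [([1, 2, 244, 248, 224, 32, 64, 112], 0),
      ([224, 16, 65, 33, 1, 24, 20, 14], 2), ([16, 224, 66, 34, 2, 24, 20, 13], 1),
      ([1, 2, 4, 8, 16, 32, 64, 128], 3)]
  | 4 => blockColumns [(conjColumns, 2), (conjColumns, 1), (conjColumns, 0),
      ([1, 2, 4, 8, 16, 32, 64, 128], 3)]
  | 5 => blockColumns [(conjColumns, 0), (conjColumns, 2), (conjColumns, 1),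
      ([1, 2, 4, 8, 16, 32, 64, 128], 3)]

/-- The action of a generator on the model; the bits from the 32nd on are left alone. -/
def genAct (s : Fin 6) (v : ℕ) : ℕ :=
  Nat.xor (linApply (genColumns s) v) (Nat.shiftLeft (Nat.shiftRight v 32) 32)

/-- The action on the model of the element spelled by a word in the generators. -/
def wordAct : List (Fin 6) → ℕ → ℕ
  | [], v => v
  | s :: u, v => force (wordAct u v) (genAct s)

theorem wordAct_cons (s : Fin 6) (u : List (Fin 6)) (v : ℕ) :
    wordAct (s :: u) v = genAct s (wordAct u v) := force_eq _ _

/-- The word acts trivially on the coordinate vectors of the model. -/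
def actsTrivially (u : List (Fin 6)) : Bool :=
  CosetLevel.allBelow 32 fun i => force (2 ^ i) fun x => Nat.beq (wordAct u x) x

theorem isXorLinear_genAct (s : Fin 6) : IsXorLinear (genAct s) :=
  (isXorLinear_linApply _).xor fun u v => by
    change (u ^^^ v) >>> 32 <<< 32 = u >>> 32 <<< 32 ^^^ v >>> 32 <<< 32
    rw [Nat.shiftRight_xor_distrib, Nat.shiftLeft_xor_distrib]

theorem isXorLinear_wordAct (u : List (Fin 6)) : IsXorLinear (wordAct u) := by
  induction u with
  | nil => exact fun _ _ => rfl
  | cons s u ih =>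
    have h : wordAct (s :: u) = genAct s ∘ wordAct u := funext (wordAct_cons s u)
    exact h ▸ (isXorLinear_genAct s).comp ih

theorem wordAct_two_pow_of_le (u : List (Fin 6)) {i : ℕ} (hi : 32 ≤ i) :
    wordAct u (2 ^ i) = 2 ^ i := by
  induction u with
  | nil => rfl
  | cons s u ih =>
    have hlen : (genColumns s).length = 32 := by fin_cases s <;> rfl
    obtain ⟨j, rfl⟩ := Nat.exists_eq_add_of_le' hi
    rw [wordAct_cons, ih]
    change linApply _ (2 ^ (j + 32)) ^^^ 2 ^ (j + 32) >>> 32 <<< 32 = 2 ^ (j + 32)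
    rw [linApply_two_pow_of_length_le (hlen.trans_le hi), Nat.zero_xor, pow_add,
      Nat.shiftRight_eq_div_pow, Nat.mul_div_cancel _ (by positivity), Nat.shiftLeft_eq]

theorem wordAct_eq_id {u : List (Fin 6)} (h : actsTrivially u) : wordAct u = id := by
  refine (isXorLinear_wordAct u).ext (fun _ _ => rfl) fun i => ?_
  simp only [actsTrivially, CosetLevel.allBelow_iff, force_eq, Nat.beq_eq] at h
  rcases lt_or_ge i 32 with hi | hi
  · exact h i hi
  · exact wordAct_two_pow_of_le u hi

theorem genAct_involutive (s : Fin 6) : Function.Involutive (genAct s) := by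
  have hcheck : ∀ s, actsTrivially [s, s] := by decide +kernel
  intro v
  have h : wordAct [s, s] v = v := congrFun (wordAct_eq_id (hcheck s)) v
  rwa [wordAct_cons, wordAct_cons] at h

/-- The permutation of the model given by a generator. -/
def genPerm (s : Fin 6) : Equiv.Perm ℕ := (genAct_involutive s).toPerm

theorem prod_map_genPerm (u : List (Fin 6)) (v : ℕ) :
    (u.map genPerm).prod v = wordAct u v := by
  induction u with
  | nil => rfl
  | cons s u ih =>
    rw [List.map_cons, List.prod_cons, Equiv.Perm.mul_apply, ih, wordAct_cons]
    rfl

theorem prod_map_genPerm_eq_one {u : List (Fin 6)} (h : actsTrivially u) :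
    (u.map genPerm).prod = 1 :=
  Equiv.ext fun v => by rw [prod_map_genPerm, wordAct_eq_id h]; rfl

/-- The word `u ^ n`. -/
def powWord {α : Type*} (u : List α) (n : ℕ) : List α := (List.replicate n u).flatten

theorem prod_map_powWord {α M : Type*} [Monoid M] (f : α → M) (u : List α) (n : ℕ) :
    ((powWord u n).map f).prod = (u.map f).prod ^ n := by
  simp [powWord, List.map_flatten, List.prod_flatten]

theorem isThetaFamily_genPerm : IsThetaFamily genPerm := by
  have hcox : ∀ i j, actsTrivially (powWord [i, j] (cox6 i j)) := by decide +kernel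
  have hfour : actsTrivially (powWord [0, 1, 2, 3, 2, 1, 4, 3, 2, 3, 4] 4) := by decide +kernel
  have hthree : actsTrivially (powWord [5, 4, 3, 2, 3, 4, 1, 2, 3, 2, 1, 4, 3, 2, 3, 4] 3) := by
    decide +kernel
  constructor
  · exact fun i j => by simpa [prod_map_powWord] using prod_map_genPerm_eq_one (hcox i j)
  · simpa [prod_map_powWord, mul_assoc] using prod_map_genPerm_eq_one hfour
  · simpa [prod_map_powWord, mul_assoc] using prod_map_genPerm_eq_one hthree

/-- The action of `Theta` on the model `𝔽₂³²`, whose vectors are encoded as natural numbers. -/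
noncomputable instance : MulAction Theta ℕ :=
  MulAction.compHom ℕ isThetaFamily_genPerm.lift

theorem word_smul (u : List (Fin 6)) (v : ℕ) : (u.map th).prod • v = wordAct u v := by
  change isThetaFamily_genPerm.lift (u.map th).prod v = wordAct u v
  simp only [map_list_prod, List.map_map, Function.comp_def, IsThetaFamily.lift_th,
    prod_map_genPerm]

/-- The action of the elements spelled by `words` on numbers below `2 ^ n`, each through a single
precomputed matrix. -/
def wordsAct {k : ℕ} (words : Fin k → List (Fin 6)) (n : ℕ) (s : Fin k) : ℕ → ℕ :=
  linApply (columns (wordAct (words s)) n)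

theorem wordsAct_apply {k : ℕ} (words : Fin k → List (Fin 6)) {n v : ℕ} (hv : v < 2 ^ n)
    (s : Fin k) : wordsAct words n s v = ((words s).map th).prod • v := by
  rw [wordsAct, linApply_columns (isXorLinear_wordAct _) hv, word_smul]

/-- The words `(st) ^ m s t`, `s ≠ t`, presenting the Coxeter group with matrix `m` and involutive
generators. -/
def coxeterRelators {k : ℕ} (m : Fin k → Fin k → ℕ) : List (List (Fin k)) :=
  (List.finRange k).flatMap fun s => (List.finRange k).flatMap fun t =>
    if s = t then [] else [powWord [s, t] (m s t)]

/-- The cyclic conjugates of the word `u ^ n`. -/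
def rotations {α : Type*} (u : List α) (n : ℕ) : List (List α) :=
  (List.range u.length).map fun i => (powWord u n).rotate i

section Relators

variable {k n : ℕ} {α Γ : Type*} [Group Γ]

theorem prod_map_eq_one_of_mem_coxeterRelators {m : Fin k → Fin k → ℕ} {g : Fin k → Γ}
    (hg : ∀ s t, s ≠ t → (g s * g t) ^ m s t = 1) {u : List (Fin k)} (hu : u ∈ coxeterRelators m) :
    (u.map g).prod = 1 := by
  simp only [coxeterRelators, List.mem_flatMap, List.mem_finRange, true_and] at hu
  obtain ⟨s, t, hu⟩ := hu
  split_ifs at hu with hst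
  · simp at hu
  · rw [List.mem_singleton.1 hu, prod_map_powWord]
    simpa using hg s t hst

theorem prod_map_eq_one_of_mem_rotations {g : α → Γ} {u v : List α} (hu : (u.map g).prod ^ n = 1)
    (hv : v ∈ rotations u n) : (v.map g).prod = 1 := by
  simp only [rotations, List.mem_map] at hv
  obtain ⟨i, -, rfl⟩ := hv
  rw [List.map_rotate]
  exact List.prod_rotate_eq_one_of_prod_eq_one (by rw [prod_map_powWord, hu]) i

end Relators

/-- Generators of the stabiliser when, of `m + 1` generators, the first `m` generate it. -/
def chainLoops (m : ℕ) : List (List (Fin (m + 1)) × Fin (m + 1)) :=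
  (List.finRange m).map fun i => ([], i.castSucc)

section Chain

variable {Γ : Type*} [Group Γ]

theorem loopSubgroup_eq_of_loops_eq_chainLoops {m : ℕ} {g : Fin (m + 1) → Γ}
    {L : CosetLevel (m + 1)} (hL : L.loops = chainLoops m) :
    L.loopSubgroup g = Subgroup.closure (Set.range (g ∘ Fin.castSucc)) := by
  rw [CosetLevel.loopSubgroup, hL]
  congr 1
  ext x
  simp [chainLoops, CosetLevel.loopElement]

/-- The product of the indices in the chain of the subgroups generated by the first few `g s`. -/
theorem card_closure_range_of_chain [MulAction Γ ℕ] {n : ℕ} {g : Fin n → Γ} {act : Fin n → ℕ → ℕ}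
    (L : ∀ m : Fin n, CosetLevel (m + 1)) (hg : ∀ s, g s * g s = 1)
    (hact : ∀ m s, ∀ v < 2 ^ (L m).bits, act s v = g s • v)
    (hrel : ∀ m, ∀ u ∈ (L m).relators, (u.map (g ∘ Fin.castLE m.2)).prod = 1)
    (hloops : ∀ m, (L m).loops = chainLoops m)
    (hcheck : ∀ m, (L m).check (act ∘ Fin.castLE m.2)) :
    Nat.card (Subgroup.closure (Set.range g)) = ∏ m, (L m).size := by
  suffices h : ∀ k (hk : k ≤ n), Nat.card (Subgroup.closure (Set.range (g ∘ Fin.castLE hk))) =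
      ∏ m : Fin k, (L (m.castLE hk)).size from h n le_rfl
  intro k hk
  induction k with
  | zero => simp
  | succ k ih =>
    have hlevel := CosetLevel.stabilizer_and_relIndex_of_check (L := L ⟨k, hk⟩)
      (g := g ∘ Fin.castLE hk) (fun s => hact _ _) (fun s => hg _) (hrel ⟨k, hk⟩) (hcheck ⟨k, hk⟩)
    rw [loopSubgroup_eq_of_loops_eq_chainLoops (hloops ⟨k, hk⟩)] at hlevel
    have hle : Subgroup.closure (Set.range ((g ∘ Fin.castLE hk) ∘ Fin.castSucc)) ≤
        Subgroup.closure (Set.range (g ∘ Fin.castLE hk)) :=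
      Subgroup.closure_mono (Set.range_comp_subset_range _ _)
    rw [Fin.prod_univ_castSucc, ← Subgroup.relIndex_bot_left,
      ← Subgroup.relIndex_mul_relIndex _ _ _ bot_le hle, Subgroup.relIndex_bot_left]
    exact congrArg₂ _ (ih (Nat.le_of_succ_le hk)) hlevel.2

end Chain

section ThetaLevel

/-- The enumeration of the cosets in `Theta` of the subgroup generated by the star. The base point
carries four different marks in its four blocks, which `a`, `b`, `c` permute, and is fixed by the
star. -/
def thetaLevel : CosetLevel 6 where
  bits := 32
  modulus := 255
  base := 3825205248
  size := 24
  passes := 1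
  relators := coxeterRelators cox6
  loops := [([0, 1, 2], 3), ([1, 2], 3), ([2], 3), ([], 3), ([], 5), ([], 4)]

theorem closure_range_th : Subgroup.closure (Set.range th) = ⊤ := by
  have hrange : Set.range th =
      QuotientGroup.mk' _ '' Set.range (PresentedGroup.of (rels := rels6)) := Set.range_comp _ _
  rw [hrange, ← MonoidHom.map_closure, PresentedGroup.closure_range_of,
    Subgroup.map_top_of_surjective _ (QuotientGroup.mk'_surjective _)]

theorem loopSubgroup_thetaLevel :
    thetaLevel.loopSubgroup th = Subgroup.closure (Set.range (starGen th)) := by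
  have hinv (i : Fin 6) : (th i)⁻¹ = th i :=
    inv_eq_of_mul_eq_one_right (isThetaFamily_th.mul_self i)
  have hloops : thetaLevel.loops.map (CosetLevel.loopElement th) =
      (List.finRange 6).map (starGen th) := by
    simp [thetaLevel, CosetLevel.loopElement, starGen, starWord, List.finRange_succ, mul_assoc,
      hinv]
  rw [CosetLevel.loopSubgroup]
  congr 1
  ext x
  simpa using congrArg (x ∈ ·) hloops

set_option maxRecDepth 100000 in
theorem thetaLevel_check : thetaLevel.check (wordsAct (fun s => [s]) thetaLevel.bits) := by
  decide +kernel

theorem relIndex_starGen_top :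
    (Subgroup.closure (Set.range (starGen th))).relIndex ⊤ = 24 := by
  rw [← loopSubgroup_thetaLevel, ← closure_range_th]
  exact (CosetLevel.stabilizer_and_relIndex_of_check
    (fun s v hv => by simpa using wordsAct_apply (fun s => [s]) hv s) isThetaFamily_th.mul_self
    (fun u => prod_map_eq_one_of_mem_coxeterRelators fun s t _ => isThetaFamily_th.pow_cox6 s t)
    thetaLevel_check).2

end ThetaLevel

section StarLevel

/-- The Coxeter matrix of a star with leaves `0, ..., 4` and centre `5`. -/
def starMatrix (s t : Fin 6) : ℕ := if s = 5 ∨ t = 5 then 3 else 2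

/-- The word spelling `highestReflection (p 5) (p x) (p y) (p z)` in the generators `p`. -/
def highestWord (x y z : Fin 6) : List (Fin 6) := [5, x, y, z, 5, z, y, x, 5]

/-- The word spelling `IsCoxeterStar.oppositeReflection` of the four inner leaves. -/
def oppositeWord (i : Fin 4) : List (Fin 6) :=
  highestWord ((i.succAbove 0).castAdd 2) ((i.succAbove 1).castAdd 2) ((i.succAbove 2).castAdd 2)

/-- The pairs of leaves `x < y` of the star. -/
def leafPairs : List (Fin 5 × Fin 5) :=
  ((List.finRange 5).product (List.finRange 5)).filter fun p => p.1 < p.2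

/-- The word `exye`, which conjugates the leaf `0` to a highest reflection. -/
def pairWord (p : Fin 5 × Fin 5) : List (Fin 6) := [5, p.1.castSucc, p.2.castSucc, 5]

/-- The enumeration, in the subgroup generated by the star, of the cosets of the stabiliser of a
vector. The relators are those of the star and `(p t) ^ 2`, `(f t) ^ 3` for the inner leaves `p` and
their opposite reflections `t`; all elements in `loops` are conjugates of the leaf `0`. -/
def starLevel : CosetLevel 6 where
  bits := 24
  modulus := 5807
  base := 252
  size := 360
  passes := 2
  relators := coxeterRelators starMatrix ++ (List.finRange 4).flatMap fun i =>
    rotations (i.castAdd 2 :: oppositeWord i) 2 ++ rotations (4 :: oppositeWord i) 3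
  loops := leafPairs.map (fun p => (pairWord p, 0)) ++ [([5, 1, 2, 3, 0, 5], 0), ([], 0)]

namespace IsThetaFamily

variable {G : Type*} [Group G] {g : Fin 6 → G} (hg : IsThetaFamily g)

theorem starGen_five : starGen g 5 = g 4 := by simp [starGen, starWord]

theorem prod_map_oppositeWord (i : Fin 4) : ((oppositeWord i).map (starGen g)).prod =
    IsCoxeterStar.oppositeReflection (g 4) (innerLeaf g) i := by
  simp [oppositeWord, highestWord, IsCoxeterStar.oppositeReflection, highestReflection, innerLeaf,
    starGen_five, mul_assoc]

include hg

theorem starGen_mul_self (s : Fin 6) : starGen g s * starGen g s = 1 := by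
  induction s using Fin.lastCases with
  | last => exact starGen_five (g := g) ▸ hg.mul_self 4
  | cast i => exact hg.isCoxeterStar_starLeaf.leaf_mul_self i

theorem starGen_pow_starMatrix {s t : Fin 6} (hst : s ≠ t) :
    (starGen g s * starGen g t) ^ starMatrix s t = 1 := by
  have hs := hg.isCoxeterStar_starLeaf
  have he : starGen g (Fin.last 5) = g 4 := starGen_five
  have hl (i : Fin 5) : starGen g i.castSucc = starLeaf g i := rfl
  have hee := hs.center_mul_self
  induction s using Fin.lastCases with
  | last =>
    induction t using Fin.lastCases with
    | last => exact absurd rfl hst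
    | cast j =>
      have hj := hs.leaf_mul_self j
      have hb := hs.braid j
      rw [he, hl, starMatrix, if_pos (.inl rfl), _root_.pow_three]
      clear * - hee hj hb
      grind
  | cast i =>
    have hi := hs.leaf_mul_self i
    induction t using Fin.lastCases with
    | last =>
      have hb := hs.braid i
      rw [he, hl, starMatrix, if_pos (.inr rfl), _root_.pow_three]
      clear * - hee hi hb
      grind
    | cast j =>
      have hj := hs.leaf_mul_self j
      have hij := hs.leaf_comm i j
      rw [hl, hl, starMatrix, if_neg (by simp [Fin.ext_iff]; omega), sq]
      clear * - hi hj hij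
      grind

theorem prod_map_starGen_eq_one {u : List (Fin 6)} (hu : u ∈ starLevel.relators) :
    (u.map (starGen g)).prod = 1 := by
  rcases List.mem_append.1 hu with hu | hu
  · exact prod_map_eq_one_of_mem_coxeterRelators (fun s t => hg.starGen_pow_starMatrix) hu
  obtain ⟨i, -, hu⟩ := List.mem_flatMap.1 hu
  rcases List.mem_append.1 hu with hu | hu
  · refine prod_map_eq_one_of_mem_rotations ?_ hu
    rw [List.map_cons, List.prod_cons, prod_map_oppositeWord]
    exact hg.innerLeaf_mul_oppositeReflection_sq i
  · refine prod_map_eq_one_of_mem_rotations ?_ hu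
    rw [List.map_cons, List.prod_cons, prod_map_oppositeWord, show starGen g 4 = g 5 by
      simp [starGen, starWord]]
    exact hg.mul_oppositeReflection_pow_three i

theorem commute_innerLeaf_oppositeReflection (i : Fin 4) :
    Commute (innerLeaf g i) (IsCoxeterStar.oppositeReflection (g 4) (innerLeaf g) i) := by
  have hs := hg.isCoxeterStar_innerLeaf
  have hi := hs.leaf_mul_self i
  have hr := hs.highestReflection_mul_self (i.succAbove 0) (i.succAbove 1) (i.succAbove 2)
  have hsq := hg.innerLeaf_mul_oppositeReflection_sq i
  rw [sq] at hsq
  unfold Commute SemiconjBy IsCoxeterStar.oppositeReflection at *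
  clear * - hi hr hsq
  grind

theorem loopElement_pairWord (p : Fin 5 × Fin 5) :
    CosetLevel.loopElement (starGen g) (pairWord p, 0) =
      highestReflection (g 4) (starLeaf g p.1) (starLeaf g p.2) (starLeaf g 0) := by
  rw [hg.isCoxeterStar_starLeaf.highestReflection_eq_conj_leaf]
  simp [CosetLevel.loopElement, pairWord, starGen_five, starLeaf, mul_assoc]

theorem loopElement_tripleWord :
    CosetLevel.loopElement (starGen g) ([5, 1, 2, 3, 0, 5], 0) =
      IsCoxeterStar.oppositeReflection (g 4) (innerLeaf g) 0 := by
  change _ = highestReflection (g 4) (innerLeaf g 1) (innerLeaf g 2) (innerLeaf g 3)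
  rw [hg.isCoxeterStar_innerLeaf.highestReflection_eq_conj_other_leaf 1 2 3 0]
  simp [CosetLevel.loopElement, starGen_five, innerLeaf, mul_assoc]

theorem commute_starGen_zero_of_mem_loopSubgroup {x : G}
    (hx : x ∈ starLevel.loopSubgroup (starGen g)) : Commute x (starGen g 0) := by
  suffices h : starLevel.loopSubgroup (starGen g) ≤ Subgroup.centralizer {starGen g 0} from
    Subgroup.mem_centralizer_singleton_iff.1 (h hx)
  rw [CosetLevel.loopSubgroup, Subgroup.closure_le]
  rintro _ ⟨p, hp, rfl⟩
  refine Subgroup.mem_centralizer_singleton_iff.2 (Commute.eq ?_)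
  simp only [starLevel, Set.mem_ofPred_eq, List.mem_append, List.mem_map, List.mem_cons,
    List.not_mem_nil, or_false] at hp
  rcases hp with ⟨p, -, rfl⟩ | rfl | rfl
  · rw [hg.loopElement_pairWord]
    exact (hg.isCoxeterStar_starLeaf.commute_leaf_highestReflection _ _ _).symm
  · rw [hg.loopElement_tripleWord]
    exact (hg.commute_innerLeaf_oppositeReflection 0).symm
  · simp [CosetLevel.loopElement]

end IsThetaFamily

set_option maxRecDepth 100000 in
theorem starLevel_check : starLevel.check (wordsAct starWord starLevel.bits) := by
  decide +kernel

end StarLevel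

section LoopElement

variable {k : ℕ} {Γ : Type*} [Group Γ] {g : Fin k → Γ} {s : Fin k}

theorem CosetLevel.loopElement_eq_of_commute {u u' : List (Fin k)}
    (h : Commute ((u'.map g).prod⁻¹ * (u.map g).prod) (g s)) :
    loopElement g (u, s) = loopElement g (u', s) := by
  have hconj := mul_inv_eq_of_eq_mul h.eq
  rw [loopElement, loopElement]
  conv_rhs => rw [← hconj]
  group

theorem CosetLevel.loopElement_nil : loopElement g ([], s) = g s := by simp [loopElement]

theorem CosetLevel.loopElement_append (u v : List (Fin k)) :
    loopElement g (u ++ v, s) =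
      (u.map g).prod * loopElement g (v, s) * (u.map g).prod⁻¹ := by
  simp [loopElement, mul_assoc]

theorem CosetLevel.loopElement_mul_self (hs : g s * g s = 1) (u : List (Fin k)) :
    loopElement g (u, s) * loopElement g (u, s) = 1 := by
  simp [loopElement, hs]

theorem CosetLevel.prod_map_append_cons_reverse (hg : ∀ s, g s * g s = 1) (u : List (Fin k)) :
    ((u ++ s :: u.reverse).map g).prod = loopElement g (u, s) := by
  have hinv (s : Fin k) : (g s)⁻¹ = g s := inv_eq_of_mul_eq_one_right (hg s)
  simp [loopElement, List.prod_inv_reverse, Function.comp_def, hinv, mul_assoc]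

end LoopElement

section E7

theorem starLeaf_castSucc {G : Type*} [Group G] (g : Fin 6 → G) (i : Fin 4) :
    starLeaf g i.castSucc = innerLeaf g i := rfl

/-- The action on the model of a word in the star generators. -/
def starAct (u : List (Fin 6)) (v : ℕ) : ℕ := wordAct (u.flatMap starWord) v

theorem prod_map_starGen (u : List (Fin 6)) :
    (u.map (starGen th)).prod = ((u.flatMap starWord).map th).prod := by
  induction u with
  | nil => rfl
  | cons s u ih => rw [List.flatMap_cons, List.map_append, List.prod_append, ← ih]; rfl

theorem prod_map_starGen_smul (u : List (Fin 6)) (v : ℕ) :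
    (u.map (starGen th)).prod • v = starAct u v := by
  rw [prod_map_starGen, word_smul, starAct]

theorem starLevel_stabilizer_and_relIndex :
    MulAction.stabilizer Theta 252 ⊓ Subgroup.closure (Set.range (starGen th)) =
        starLevel.loopSubgroup (starGen th) ∧
      (starLevel.loopSubgroup (starGen th)).relIndex (Subgroup.closure (Set.range (starGen th))) =
        360 :=
  CosetLevel.stabilizer_and_relIndex_of_check (fun s _ hv => wordsAct_apply starWord hv s)
    isThetaFamily_th.starGen_mul_self (fun _ => isThetaFamily_th.prod_map_starGen_eq_one)
    starLevel_check

/-- If two words map the base point to the same vector, they differ by an element of its stabiliser,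
which centralises the leaf `0`. Hence conjugation relations between conjugates of that leaf can be
read off from the model. -/
theorem loopElement_eq_of_starAct_eq {u u' : List (Fin 6)} (h : starAct u 252 = starAct u' 252) :
    CosetLevel.loopElement (starGen th) (u, 0) = CosetLevel.loopElement (starGen th) (u', 0) := by
  have hmem (u : List (Fin 6)) :
      (u.map (starGen th)).prod ∈ Subgroup.closure (Set.range (starGen th)) :=
    Subgroup.list_prod_mem _ fun x hx => by
      obtain ⟨s, -, rfl⟩ := List.mem_map.1 hx
      exact Subgroup.subset_closure ⟨s, rfl⟩
  rw [← prod_map_starGen_smul, ← prod_map_starGen_smul, ← inv_smul_eq_iff, smul_smul] at h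
  exact CosetLevel.loopElement_eq_of_commute
    (isThetaFamily_th.commute_starGen_zero_of_mem_loopSubgroup
      (starLevel_stabilizer_and_relIndex.1.le
        ⟨h, Subgroup.mul_mem _ (Subgroup.inv_mem _ (hmem u')) (hmem u)⟩))

/-- The leaves `x`, `y` of the words `exye` that conjugate the leaf `0` to simple reflections of a
Coxeter group of type `E₇`. -/
def e7Pair : Fin 7 → Fin 5 × Fin 5 := ![(0, 4), (1, 2), (3, 4), (0, 1), (0, 2), (1, 4), (0, 3)]

/-- The word in the star generators that spells `e7Gen i`. -/
def e7Word (i : Fin 7) : List (Fin 6) :=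
  pairWord (e7Pair i) ++ 0 :: (pairWord (e7Pair i)).reverse

/-- The simple reflections of the subgroup of type `E₇`. -/
def e7Gen (i : Fin 7) : Theta := CosetLevel.loopElement (starGen th) (pairWord (e7Pair i), 0)

/-- The Coxeter matrix of type `E₇`, except that its diagonal entries are irrelevant. -/
def e7Matrix (i j : Fin 7) : ℕ :=
  if (min i j, max i j) ∈ [(0, 1), (1, 2), (2, 3), (2, 4), (4, 5), (5, 6)] then 3 else 2

theorem prod_map_starGen_e7Word (i : Fin 7) : ((e7Word i).map (starGen th)).prod = e7Gen i :=
  CosetLevel.prod_map_append_cons_reverse isThetaFamily_th.starGen_mul_self _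

theorem loopElement_e7Word_append (i : Fin 7) (u : List (Fin 6)) :
    CosetLevel.loopElement (starGen th) (e7Word i ++ u, 0) =
      e7Gen i * CosetLevel.loopElement (starGen th) (u, 0) * (e7Gen i)⁻¹ := by
  rw [CosetLevel.loopElement_append, prod_map_starGen_e7Word]

theorem e7Gen_mul_self (i : Fin 7) : e7Gen i * e7Gen i = 1 :=
  CosetLevel.loopElement_mul_self (isThetaFamily_th.starGen_mul_self 0) _

theorem starAct_e7Word : ∀ i j, i ≠ j →
    starAct (e7Word i ++ pairWord (e7Pair j)) 252 =
      starAct (if e7Matrix i j = 3 then e7Word j ++ pairWord (e7Pair i) else pairWord (e7Pair j))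
        252 := by
  decide +kernel

theorem e7Gen_pow_e7Matrix {i j : Fin 7} (hij : i ≠ j) :
    (e7Gen i * e7Gen j) ^ e7Matrix i j = 1 := by
  have h := loopElement_eq_of_starAct_eq (starAct_e7Word i j hij)
  have hi := e7Gen_mul_self i
  have hj := e7Gen_mul_self j
  have h23 : e7Matrix i j = 3 ∨ e7Matrix i j = 2 := by unfold e7Matrix; split_ifs <;> simp
  rcases h23 with h23 | h23 <;> rw [h23] at h ⊢
  · rw [if_pos rfl, loopElement_e7Word_append, loopElement_e7Word_append, ← e7Gen, ← e7Gen,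
      inv_eq_of_mul_eq_one_right hi, inv_eq_of_mul_eq_one_right hj] at h
    rw [_root_.pow_three]
    generalize e7Gen i = x at *
    generalize e7Gen j = y at *
    clear * - h hi hj
    grind
  · rw [if_neg (by decide), loopElement_e7Word_append, ← e7Gen,
      inv_eq_of_mul_eq_one_right hi] at h
    rw [sq]
    generalize e7Gen i = x at *
    generalize e7Gen j = y at *
    clear * - h hi hj
    grind

/-- The enumeration of the cosets of `⟨r₀, ..., r_{m-1}⟩` in `⟨r₀, ..., r_m⟩`, for `r = e7Gen`; the
bits used carry the 8-dimensional first octonion. -/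
def e7Level (m : Fin 7) : CosetLevel (m + 1) where
  bits := 8
  modulus := 256
  base := ![1, 3, 7, 19, 51, 12, 127] m
  size := ![2, 3, 4, 5, 16, 27, 56] m
  passes := 1
  relators := coxeterRelators fun s t => e7Matrix (s.castLE m.2) (t.castLE m.2)
  loops := chainLoops m

set_option maxRecDepth 100000 in
theorem e7Level_check : ∀ m, (e7Level m).check
    (wordsAct (fun i => (e7Word i).flatMap starWord) 8 ∘ Fin.castLE m.2) := by
  decide +kernel

theorem card_closure_range_e7Gen :
    Nat.card (Subgroup.closure (Set.range e7Gen)) = 2903040 := by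
  rw [card_closure_range_of_chain e7Level e7Gen_mul_self (fun m s v hv => ?_) (fun m u hu => ?_)
    (fun _ => rfl) e7Level_check]
  · rfl
  · rw [wordsAct_apply _ (n := 8) hv, ← prod_map_starGen, prod_map_starGen_e7Word]
  · exact prod_map_eq_one_of_mem_coxeterRelators
      (fun s t hst => e7Gen_pow_e7Matrix ((Fin.castLE_injective m.2).ne hst)) hu

theorem loopElement_mem_closure_range_e7Gen {u : List (Fin 6)} (v : List (Fin 7)) (j : Fin 7)
    (h : starAct u 252 = starAct (v.flatMap e7Word ++ pairWord (e7Pair j)) 252) :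
    CosetLevel.loopElement (starGen th) (u, 0) ∈ Subgroup.closure (Set.range e7Gen) := by
  rw [loopElement_eq_of_starAct_eq h]
  clear h
  have hgen (i : Fin 7) : e7Gen i ∈ Subgroup.closure (Set.range e7Gen) :=
    Subgroup.subset_closure ⟨i, rfl⟩
  induction v with
  | nil => exact hgen j
  | cons i v ih =>
    rw [List.flatMap_cons, List.append_assoc, loopElement_e7Word_append]
    exact mul_mem (mul_mem (hgen i) ih) (inv_mem (hgen i))

/-- For a pair of leaves, `(v, j)` such that the loop element at the pair is conjugate to `e7Gen j`
under the word `v`. -/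
def e7PairWord : Fin 5 × Fin 5 → List (Fin 7) × Fin 7
  | (1, 3) => ([0, 1, 2, 4, 5, 6, 3, 2, 4, 5, 1, 2, 4, 3, 2, 1], 0)
  | (2, 3) => ([5, 6, 4, 5, 2, 4, 3, 2], 1)
  | (2, 4) => ([3, 2, 4, 5, 1, 2, 4, 3, 2, 1], 0)
  | p => ([], (List.finRange 7).find? (e7Pair · = p) |>.getD 0)

theorem highestReflection_mem_closure_range_e7Gen {x y : Fin 5} (hxy : (x, y) ∈ leafPairs) :
    highestReflection (th 4) (starLeaf th x) (starLeaf th y) (starLeaf th 0) ∈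
      Subgroup.closure (Set.range e7Gen) := by
  have hcheck : ∀ p ∈ leafPairs, starAct (pairWord p) 252 =
      starAct ((e7PairWord p).1.flatMap e7Word ++ pairWord (e7Pair (e7PairWord p).2)) 252 := by
    decide +kernel
  rw [← isThetaFamily_th.loopElement_pairWord (x, y)]
  exact loopElement_mem_closure_range_e7Gen _ _ (hcheck _ hxy)

theorem oppositeReflection_mem_closure_range_e7Gen (i : Fin 4) :
    IsCoxeterStar.oppositeReflection (th 4) (innerLeaf th) i ∈
      Subgroup.closure (Set.range e7Gen) := by
  have hs := isThetaFamily_th.isCoxeterStar_innerLeaf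
  have hmem (j k : Fin 4) (hjk : (j.castSucc, k.castSucc) ∈ leafPairs) :
      highestReflection (th 4) (innerLeaf th 0) (innerLeaf th j) (innerLeaf th k) ∈
        Subgroup.closure (Set.range e7Gen) := by
    rw [hs.highestReflection_rotate, ← starLeaf_castSucc, ← starLeaf_castSucc, ← starLeaf_castSucc]
    exact highestReflection_mem_closure_range_e7Gen hjk
  match i with
  | 0 =>
    rw [← isThetaFamily_th.loopElement_tripleWord]
    exact loopElement_mem_closure_range_e7Gen [2, 4, 3, 2] 1 (by decide +kernel)
  | 1 => exact hmem 2 3 (by decide)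
  | 2 => exact hmem 1 3 (by decide)
  | 3 => exact hmem 1 2 (by decide)

/-- All factors of `prod_leaf_mul_oppositeReflection` but this leaf are highest reflections. -/
theorem innerLeaf_zero_mem_closure_range_e7Gen :
    innerLeaf th 0 ∈ Subgroup.closure (Set.range e7Gen) := by
  have hs := isThetaFamily_th.isCoxeterStar_innerLeaf
  have hopp := oppositeReflection_mem_closure_range_e7Gen
  have hleaf (i : Fin 4) (hi : (0, i.castSucc) ∈ leafPairs) :
      innerLeaf th i ∈ Subgroup.closure (Set.range e7Gen) := by
    rw [← hs.highestReflection_leaf_self 0 i, ← starLeaf_castSucc, ← starLeaf_castSucc]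
    exact highestReflection_mem_closure_range_e7Gen hi
  have hprod := hs.prod_leaf_mul_oppositeReflection
    isThetaFamily_th.commute_innerLeaf_oppositeReflection
  have hone := one_mem (Subgroup.closure (Set.range e7Gen))
  rwa [← hprod, Subgroup.mul_mem_cancel_right _ (mul_mem (hleaf 3 (by decide)) (hopp 3)),
    Subgroup.mul_mem_cancel_right _ (mul_mem (hleaf 2 (by decide)) (hopp 2)),
    Subgroup.mul_mem_cancel_right _ (mul_mem (hleaf 1 (by decide)) (hopp 1)),
    Subgroup.mul_mem_cancel_right _ (hopp 0)] at hone

theorem loopSubgroup_starLevel :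
    starLevel.loopSubgroup (starGen th) = Subgroup.closure (Set.range e7Gen) := by
  rw [CosetLevel.loopSubgroup]
  refine le_antisymm (Subgroup.closure_le _ |>.2 ?_) (Subgroup.closure_mono ?_)
  · rintro _ ⟨q, hq, rfl⟩
    simp only [starLevel, Set.mem_ofPred_eq, List.mem_append, List.mem_map, List.mem_cons,
      List.not_mem_nil, or_false] at hq
    rcases hq with ⟨p, hp, rfl⟩ | rfl | rfl
    · rw [isThetaFamily_th.loopElement_pairWord]
      exact highestReflection_mem_closure_range_e7Gen hp
    · rw [isThetaFamily_th.loopElement_tripleWord]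
      exact oppositeReflection_mem_closure_range_e7Gen 0
    · rw [CosetLevel.loopElement_nil]
      exact innerLeaf_zero_mem_closure_range_e7Gen
  · rintro _ ⟨i, rfl⟩
    have hpair : ∀ i, (pairWord (e7Pair i), 0) ∈ starLevel.loops := by decide
    exact ⟨_, hpair i, rfl⟩

end E7

section Cardinality

theorem card_theta : Nat.card Theta = 24 * 360 * 2903040 := by
  have hle : Subgroup.closure (Set.range e7Gen) ≤ Subgroup.closure (Set.range (starGen th)) := by
    rw [← loopSubgroup_starLevel, ← starLevel_stabilizer_and_relIndex.1]
    exact inf_le_right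
  have hstar := starLevel_stabilizer_and_relIndex.2
  rw [loopSubgroup_starLevel] at hstar
  calc Nat.card Theta = (⊥ : Subgroup Theta).relIndex ⊤ := by
        rw [Subgroup.relIndex_bot_left, Subgroup.card_top]
    _ = (⊥ : Subgroup Theta).relIndex (Subgroup.closure (Set.range e7Gen)) *
          ((Subgroup.closure (Set.range e7Gen)).relIndex
              (Subgroup.closure (Set.range (starGen th))) *
            (Subgroup.closure (Set.range (starGen th))).relIndex ⊤) := by
        rw [Subgroup.relIndex_mul_relIndex _ _ _ hle le_top,
          Subgroup.relIndex_mul_relIndex _ _ _ bot_le le_top]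
    _ = 2903040 * (360 * 24) := by
        rw [Subgroup.relIndex_bot_left, card_closure_range_e7Gen, hstar, relIndex_starGen_top]
    _ = 24 * 360 * 2903040 := by norm_num

/-- The enumeration of the cosets of the subgroup generated by the first `m` of the generators
`b, c, d, e, f` in the one generated by the first `m + 1`; the last relation of `Theta` enters only
for `m = 4`. -/
def vertexLevel (m : Fin 5) : CosetLevel (m + 1) where
  bits := 24
  modulus := ![256, 256, 17, 101, 256] m
  base := ![4, 16, 7168, 2, 188417] m
  size := ![2, 3, 8, 24, 81] m
  passes := 1
  relators := coxeterRelators (fun s t => cox6 (s.castLE m.2).succ (t.castLE m.2).succ) ++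
    m.lastCases (rotations [4, 3, 2, 1, 2, 3, 0, 1, 2, 1, 0, 3, 2, 1, 2, 3] 3) fun _ => []
  loops := chainLoops m

set_option maxRecDepth 100000 in
theorem vertexLevel_check : ∀ m, (vertexLevel m).check
    (wordsAct (fun s : Fin 5 => [s.succ]) 24 ∘ Fin.castLE m.2) := by
  decide +kernel

theorem card_closure_range_th_succ :
    Nat.card (Subgroup.closure (Set.range (th ∘ Fin.succ))) = 93312 := by
  rw [card_closure_range_of_chain (g := th ∘ Fin.succ) vertexLevel
    (fun s => isThetaFamily_th.mul_self _) (fun m s v hv => ?_) (fun m u hu => ?_) (fun _ => rfl)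
    vertexLevel_check]
  · rfl
  · rw [wordsAct_apply _ (n := 24) hv, List.map_singleton, List.prod_singleton, Function.comp_apply]
  rcases List.mem_append.1 hu with hu | hu
  · exact prod_map_eq_one_of_mem_coxeterRelators (fun s t _ => isThetaFamily_th.pow_cox6 _ _) hu
  induction m using Fin.lastCases with
  | last =>
    rw [Fin.lastCases_last] at hu
    refine prod_map_eq_one_of_mem_rotations ?_ hu
    simpa [mul_assoc] using isThetaFamily_th.pow_three
  | cast m =>
    rw [Fin.lastCases_castSucc] at hu
    simp at hu

end Cardinality

/-- The subgroup of Theta generated by the images of b,c,d,e,f has index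
268800 = 2^9 * 3 * 5^2 * 7. -/
theorem stmt_2 :
    (Subgroup.closure ({th 1, th 2, th 3, th 4, th 5} : Set Theta)).index =
      2 ^ 9 * 3 * 5 ^ 2 * 7 := by
  have hgen : ({th 1, th 2, th 3, th 4, th 5} : Set Theta) = Set.range (th ∘ Fin.succ) := by
    ext x
    simp [Fin.exists_fin_succ, eq_comm]
  have hcard := Subgroup.card_mul_index (Subgroup.closure (Set.range (th ∘ Fin.succ)))
  rw [card_closure_range_th_succ, card_theta] at hcard
  rw [hgen]
  omega
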